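/- arXiv:1908.06485 — 2 statements merged into one kernel-verified Lean document; each statement's English description precedes it below -/
import Mathlib

section
/- Suppose Assumptions (A1) and (A2) hold and let d ≥ 2. Then there exists a constant C > 0, depending only on g, V and d (not on ε or on the solution), such that for every ε > 0 and every classical solution (u, m) of the discounted MFG system one has ‖Du‖_{L^∞(T^d)} + ‖m‖_{L^∞(T^d)} ≤ C. -/
open MeasureTheory Set

noncomputable def pd (d : ℕ) (i : Fin d) (f : (Fin d → ℝ) → ℝ) : (Fin d → ℝ) → ℝ :=
  fun x => fderiv ℝ f x (Pi.single i 1)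

noncomputable def gradSq (d : ℕ) (u : (Fin d → ℝ) → ℝ) (x : Fin d → ℝ) : ℝ :=
  ∑ i, pd d i u x ^ 2

noncomputable def divUp (d : ℕ) (m u : (Fin d → ℝ) → ℝ) (x : Fin d → ℝ) : ℝ :=
  ∑ i, pd d i (fun y => m y * pd d i u y) x

/-- `f` is `ℤ^d`-periodic, i.e. a function on the flat torus `T^d`. -/
def ZPer (d : ℕ) (f : (Fin d → ℝ) → ℝ) : Prop :=
  ∀ (x : Fin d → ℝ) (k : Fin d → ℤ), f (x + fun i => (k i : ℝ)) = f x

/-- `f` has finite `α`-Hölder seminorm. -/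
def HolderSemi (α : ℝ) {E : Type*} [PseudoMetricSpace E] (f : E → ℝ) : Prop :=
  ∃ C : ℝ, 0 ≤ C ∧ ∀ x y, |f x - f y| ≤ C * dist x y ^ α

/-- `f` is of class `C^{1,α}`. -/
def C1Hold (d : ℕ) (α : ℝ) (f : (Fin d → ℝ) → ℝ) : Prop :=
  ContDiff ℝ 1 f ∧ ∀ i, HolderSemi α (pd d i f)

/-- `f` is of class `C^{2,α}`. -/
def C2Hold (d : ℕ) (α : ℝ) (f : (Fin d → ℝ) → ℝ) : Prop :=
  ContDiff ℝ 2 f ∧ ∀ i j, HolderSemi α (pd d i (pd d j f))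

/-- `f` is locally `α`-Hölder on `s`. -/
def LocHolderOn (α : ℝ) (f : ℝ → ℝ) (s : Set ℝ) : Prop :=
  ∀ K : Set ℝ, IsCompact K → K ⊆ s →
    ∃ C : ℝ, 0 ≤ C ∧ ∀ x ∈ K, ∀ y ∈ K, |f x - f y| ≤ C * dist x y ^ α

/-- Standing hypotheses on `g`: strictly increasing and continuous on `[0,∞)`,
of class `C^{1,α}` on `(0,∞)`. -/
def Ghyp (α : ℝ) (g : ℝ → ℝ) : Prop :=
  StrictMonoOn g (Ici 0) ∧ ContinuousOn g (Ici 0) ∧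
    DifferentiableOn ℝ g (Ioi 0) ∧ LocHolderOn α (deriv g) (Ioi 0)

/-- Standing hypotheses on `V`: a `C^{1,α}` function on the torus. -/
def Vhyp (d : ℕ) (α : ℝ) (V : (Fin d → ℝ) → ℝ) : Prop :=
  ZPer d V ∧ C1Hold d α V

/-- The oscillation of `V` over the torus. -/
noncomputable def oscV (d : ℕ) (V : (Fin d → ℝ) → ℝ) : ℝ :=
  sSup (V '' Icc (0 : Fin d → ℝ) 1) - sInf (V '' Icc (0 : Fin d → ℝ) 1)

/-- Assumption (A1): `g⁻¹(g(1) − osc V) > 0`, i.e. `g(1) − osc V` is attained by `g` on `(0,∞)`. -/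
def A1 (d : ℕ) (g : ℝ → ℝ) (V : (Fin d → ℝ) → ℝ) : Prop :=
  g 1 - oscV d V ∈ g '' Ioi (0 : ℝ)

/-- Assumption (A2). -/
def A2 (g : ℝ → ℝ) : Prop :=
  ∃ C₁ C₂ β : ℝ, 0 < C₁ ∧ 0 < C₂ ∧
    (∀ z : ℝ, 0 < z → C₁ * z ^ β ≤ deriv g z) ∧
    (∀ z : ℝ, 0 ≤ z → g z ≤ C₂ + z * g z)

/-- A classical solution `(u, m)` of the discounted MFG system
`ε u + |Du|²/2 + V = g(m)`, `ε m − div(m Du) = ε` on `T^d`. -/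
structure DiscSol (d : ℕ) (α : ℝ) (g : ℝ → ℝ) (V : (Fin d → ℝ) → ℝ) (ε : ℝ)
    (u m : (Fin d → ℝ) → ℝ) : Prop where
  per_u : ZPer d u
  per_m : ZPer d m
  reg_u : C2Hold d α u
  reg_m : C1Hold d α m
  m_nonneg : ∀ x, 0 ≤ m x
  hj : ∀ x, ε * u x + (1 / 2) * gradSq d u x + V x = g (m x)
  fp : ∀ x, ε * m x - divUp d m u x = ε

/-- A classical solution `(u, m, H̄)` of the ergodic MFG system
`|Du|²/2 + V = g(m) + H̄`, `−div(m Du) = 0`, `m ≥ 0`, `∫ m = 1` on `T^d`. -/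
structure ErgSol (d : ℕ) (α : ℝ) (g : ℝ → ℝ) (V : (Fin d → ℝ) → ℝ)
    (u m : (Fin d → ℝ) → ℝ) (H : ℝ) : Prop where
  per_u : ZPer d u
  per_m : ZPer d m
  reg_u : C2Hold d α u
  reg_m : C1Hold d α m
  m_nonneg : ∀ x, 0 ≤ m x
  m_mass : (∫ x in Icc (0 : Fin d → ℝ) 1, m x) = 1
  hj : ∀ x, (1 / 2) * gradSq d u x + V x = g (m x) + H
  fp : ∀ x, divUp d m u x = 0


lemma ZPer.exists_mem {d : ℕ} (x : Fin d → ℝ) :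
    ∃ y ∈ Icc (0 : Fin d → ℝ) 1, ∃ k : Fin d → ℤ, x = y + fun i => (k i : ℝ) := by
  refine ⟨fun i => Int.fract (x i), ⟨fun i => Int.fract_nonneg _, fun i => (Int.fract_lt_one _).le⟩,
    fun i => ⌊x i⌋, ?_⟩
  funext i
  simp [Int.fract_add_floor]

lemma ZPer.bdd {d : ℕ} {f : (Fin d → ℝ) → ℝ} (hp : ZPer d f) (hf : Continuous f) :
    ∃ C, 0 ≤ C ∧ ∀ x, |f x| ≤ C := by
  obtain ⟨C, hC⟩ := (isCompact_Icc (a := (0 : Fin d → ℝ)) (b := 1)).exists_bound_of_continuousOn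
    hf.continuousOn
  refine ⟨|C|, abs_nonneg _, fun x => ?_⟩
  obtain ⟨y, hy, k, rfl⟩ := ZPer.exists_mem x
  rw [hp y k]
  exact (hC y hy).trans (le_abs_self _)

lemma ZPer.exists_min {d : ℕ} {f : (Fin d → ℝ) → ℝ} (hp : ZPer d f) (hf : Continuous f) :
    ∃ x₀, ∀ x, f x₀ ≤ f x := by
  obtain ⟨x₀, _, h⟩ := (isCompact_Icc (a := (0 : Fin d → ℝ)) (b := 1)).exists_isMinOn
    ⟨0, by simp⟩ hf.continuousOn
  refine ⟨x₀, fun x => ?_⟩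
  obtain ⟨y, hy, k, rfl⟩ := ZPer.exists_mem x
  rw [hp y k]
  exact h hy

lemma ZPer.pd {d : ℕ} {f : (Fin d → ℝ) → ℝ} (hp : ZPer d f) (i : Fin d) : ZPer d (pd d i f) := by
  intro x k
  unfold _root_.pd
  rw [← fderiv_comp_add_right]
  congr 2
  funext y
  exact hp y k

lemma ZPer.mul {d : ℕ} {f g : (Fin d → ℝ) → ℝ} (hp : ZPer d f) (hq : ZPer d g) :
    ZPer d (fun x => f x * g x) := by
  intro x k
  simp only [hp x k, hq x k]

lemma ZPer.shift {d : ℕ} {f : (Fin d → ℝ) → ℝ} (hp : ZPer d f) (v : Fin d → ℝ) :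
    ZPer d (fun x => f (x + v)) := by
  intro x k
  simp only
  rw [add_right_comm, hp]

lemma ZPer.comp {d : ℕ} {f : (Fin d → ℝ) → ℝ} (hp : ZPer d f) (φ : ℝ → ℝ) :
    ZPer d (fun x => φ (f x)) := by
  intro x k
  simp only [hp x k]

lemma pd_cont {d : ℕ} {f : (Fin d → ℝ) → ℝ} (hf : ContDiff ℝ 1 f) (i : Fin d) :
    Continuous (pd d i f) :=
  (hf.continuous_fderiv (by norm_num)).clm_apply continuous_const

lemma pd_contDiff {d : ℕ} {f : (Fin d → ℝ) → ℝ} (hf : ContDiff ℝ 2 f) (i : Fin d) :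
    ContDiff ℝ 1 (pd d i f) :=
  (hf.fderiv_right (m := 1) (by norm_num)).clm_apply contDiff_const

lemma pd_mul {d : ℕ} {f g : (Fin d → ℝ) → ℝ} (hf : ContDiff ℝ 1 f) (hg : ContDiff ℝ 1 g)
    (i : Fin d) (x : Fin d → ℝ) :
    pd d i (fun y => f y * g y) x = pd d i f x * g x + f x * pd d i g x := by
  unfold pd
  rw [fderiv_fun_mul (hf.differentiable (by norm_num) x) (hg.differentiable (by norm_num) x)]
  simp
  ring

lemma pd_comp {d : ℕ} {f : (Fin d → ℝ) → ℝ} {φ : ℝ → ℝ} {φ' : ℝ} {x : Fin d → ℝ}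
    (hf : ContDiff ℝ 1 f) (hφ : HasDerivAt φ φ' (f x)) (i : Fin d) :
    pd d i (fun y => φ (f y)) x = φ' * pd d i f x := by
  unfold pd
  have := (hφ.comp_hasFDerivAt x (hf.differentiable (by norm_num) x).hasFDerivAt).fderiv
  change fderiv ℝ (φ ∘ f) x _ = _
  rw [this]
  simp

lemma pd_shift {d : ℕ} {f : (Fin d → ℝ) → ℝ} (i : Fin d) (x v : Fin d → ℝ) :
    pd d i (fun y => f (y + v)) x = pd d i f (x + v) := by
  unfold pd
  rw [fderiv_comp_add_right]

lemma pd_symm {d : ℕ} {f : (Fin d → ℝ) → ℝ} (hf : ContDiff ℝ 2 f) (i j : Fin d) (x : Fin d → ℝ) :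
    pd d i (pd d j f) x = pd d j (pd d i f) x := by
  have h : ∀ i j, pd d i (pd d j f) x = fderiv ℝ (fderiv ℝ f) x (Pi.single i 1) (Pi.single j 1) := by
    intro i j
    have hd : DifferentiableAt ℝ (fderiv ℝ f) x :=
      (hf.fderiv_right (m := 1) (by norm_num)).differentiable (by norm_num) x
    unfold pd
    rw [fderiv_clm_apply hd (by fun_prop)]
    simp
  rw [h, h]
  exact (hf.contDiffAt.isSymmSndFDerivAt (by simp)).eq _ _

lemma int_cont {d : ℕ} {f : (Fin d → ℝ) → ℝ} (hf : Continuous f) :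
    IntegrableOn f (Icc (0 : Fin d → ℝ) 1) :=
  hf.continuousOn.integrableOn_compact isCompact_Icc

/-- Divergence theorem on the torus. -/
lemma int_div {d : ℕ} (hd : 2 ≤ d) (F : Fin d → (Fin d → ℝ) → ℝ) (hF : ∀ i, ContDiff ℝ 1 (F i))
    (hp : ∀ i, ZPer d (F i)) :
    ∫ x in Icc (0 : Fin d → ℝ) 1, ∑ i, pd d i (F i) x = 0 := by
  obtain ⟨n, rfl⟩ : ∃ n, d = n + 1 := ⟨d - 1, by omega⟩
  have h := integral_divergence_of_hasFDerivAt_off_countable' (0 : Fin (n + 1) → ℝ) 1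
    (by intro i; simp) F (fun i x => fderiv ℝ (F i) x) ∅ (by simp)
    (fun i => (hF i).continuous.continuousOn)
    (fun x _ i => ((hF i).differentiable (by norm_num) x).hasFDerivAt)
    (int_cont (continuous_finsetSum _ fun i _ => pd_cont (hF i) i))
  unfold pd
  rw [h]
  refine Finset.sum_eq_zero fun i _ => ?_
  rw [sub_eq_zero]
  congr 1
  funext x
  rw [← hp i (i.insertNth ((0 : Fin (n + 1) → ℝ) i) x) (Pi.single i 1)]
  congr 1
  funext j
  refine Fin.succAboveCases i ?_ (fun j => ?_) j <;> simp

/-- Weak form. -/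
lemma int_weak {d : ℕ} (hd : 2 ≤ d) (F : Fin d → (Fin d → ℝ) → ℝ) (hF : ∀ i, ContDiff ℝ 1 (F i))
    (hp : ∀ i, ZPer d (F i)) (ψ : (Fin d → ℝ) → ℝ) (hψ : ContDiff ℝ 1 ψ) (hψp : ZPer d ψ) :
    ∫ x in Icc (0 : Fin d → ℝ) 1, ((∑ k, F k x * pd d k ψ x) + (∑ k, pd d k (F k) x) * ψ x) = 0 := by
  rw [← int_div hd (fun k y => F k y * ψ y) (fun k => (hF k).mul hψ) (fun k => (hp k).mul hψp)]
  congr 1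
  funext x
  rw [Finset.sum_mul, ← Finset.sum_add_distrib]
  refine Finset.sum_congr rfl fun k _ => ?_
  rw [pd_mul (hF k) hψ]
  ring

lemma hasDerivAt_shift {d : ℕ} {f : (Fin d → ℝ) → ℝ} (hf : ContDiff ℝ 1 f) (i : Fin d)
    (x : Fin d → ℝ) (t : ℝ) :
    HasDerivAt (fun t : ℝ => f (x + t • Pi.single i 1)) (pd d i f (x + t • Pi.single i 1)) t := by
  have h1 : HasDerivAt (fun t : ℝ => x + t • (Pi.single i 1 : Fin d → ℝ)) (Pi.single i 1) t := by
    simpa using ((hasDerivAt_id t).smul_const (Pi.single i 1 : Fin d → ℝ)).const_add x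
  exact (hf.differentiable (by norm_num) _).hasFDerivAt.comp_hasDerivAt t h1

/-- Differentiated weak form. -/
lemma int_weak_diff {d : ℕ} (hd : 2 ≤ d) (F : Fin d → (Fin d → ℝ) → ℝ)
    (hF : ∀ i, ContDiff ℝ 1 (F i)) (hp : ∀ i, ZPer d (F i))
    (G : (Fin d → ℝ) → ℝ) (hG : ContDiff ℝ 1 G) (hGp : ZPer d G)
    (hFG : ∀ x, ∑ k, pd d k (F k) x = G x)
    (ψ : (Fin d → ℝ) → ℝ) (hψ : ContDiff ℝ 1 ψ) (hψp : ZPer d ψ) (i : Fin d) :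
    ∫ x in Icc (0 : Fin d → ℝ) 1,
      ((∑ k, pd d i (F k) x * pd d k ψ x) + pd d i G x * ψ x) = 0 := by
  have hz : ∀ t : ℝ, ∫ x in Icc (0 : Fin d → ℝ) 1,
      ((∑ k, F k (x + t • Pi.single i 1) * pd d k ψ x) + G (x + t • Pi.single i 1) * ψ x) = 0 := by
    intro t
    have := int_weak hd (fun k x => F k (x + t • Pi.single i 1))
      (fun k => (hF k).comp (by fun_prop)) (fun k => (hp k).shift _) ψ hψ hψp
    simp only [pd_shift, hFG] at this
    exact this
  choose B hB0 hB using fun k => ((hp k).pd i).bdd (pd_cont (hF k) i)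
  obtain ⟨B', hB'0, hB'⟩ := (hGp.pd i).bdd (pd_cont hG i)
  have hc := fun k => pd_cont hψ k
  have hFc := fun k => (hF k).continuous
  have hFc' := fun k => pd_cont (hF k) i
  have hGc := hG.continuous
  have hGc' := pd_cont hG i
  have hψc := hψ.continuous
  have key := (hasDerivAt_integral_of_dominated_loc_of_deriv_le
    (μ := volume.restrict (Icc (0 : Fin d → ℝ) 1)) (x₀ := (0 : ℝ)) (s := univ)
    (F := fun t x => (∑ k, F k (x + t • Pi.single i 1) * pd d k ψ x)
      + G (x + t • Pi.single i 1) * ψ x)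
    (F' := fun t x => (∑ k, pd d i (F k) (x + t • Pi.single i 1) * pd d k ψ x)
      + pd d i G (x + t • Pi.single i 1) * ψ x)
    (bound := fun x => (∑ k, B k * |pd d k ψ x|) + B' * |ψ x|)
    Filter.univ_mem
    (Filter.Eventually.of_forall fun t => by
      apply Continuous.aestronglyMeasurable
      fun_prop)
    (int_cont (by fun_prop))
    (by
      apply Continuous.aestronglyMeasurable
      fun_prop)
    (Filter.Eventually.of_forall fun x t _ => by
      rw [Real.norm_eq_abs]
      refine (abs_add_le _ _).trans (add_le_add ((Finset.abs_sum_le_sum_abs _ _).trans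
        (Finset.sum_le_sum fun k _ => ?_)) ?_)
      · rw [abs_mul]
        exact mul_le_mul_of_nonneg_right (hB k _) (abs_nonneg _)
      · rw [abs_mul]
        exact mul_le_mul_of_nonneg_right (hB' _) (abs_nonneg _))
    (int_cont (by fun_prop))
    (Filter.Eventually.of_forall fun x t _ => by
      refine HasDerivAt.add (HasDerivAt.fun_sum fun k _ => ?_) ?_
      · exact (hasDerivAt_shift (hF k) i x t).mul_const _
      · exact (hasDerivAt_shift hG i x t).mul_const _)).2
  have h0 : HasDerivAt (fun t : ℝ => ∫ x in Icc (0 : Fin d → ℝ) 1,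
      ((∑ k, F k (x + t • Pi.single i 1) * pd d k ψ x) + G (x + t • Pi.single i 1) * ψ x)) 0 0 := by
    simp only [hz]
    exact hasDerivAt_const _ _
  have := key.unique h0
  simpa using this

/-- Second-order necessary condition at a minimum. -/
lemma min_pd {d : ℕ} {u : (Fin d → ℝ) → ℝ} (hu : ContDiff ℝ 2 u) {x₀ : Fin d → ℝ}
    (hm : ∀ x, u x₀ ≤ u x) (i : Fin d) : pd d i u x₀ = 0 ∧ 0 ≤ pd d i (pd d i u) x₀ := by
  have hu1 : ContDiff ℝ 1 u := hu.of_le (by norm_num)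
  have h1 : pd d i u x₀ = 0 := by
    have : IsLocalMin u x₀ := Filter.Eventually.of_forall hm
    unfold pd
    rw [this.fderiv_eq_zero]
    rfl
  refine ⟨h1, ?_⟩
  by_contra hneg
  push Not at hneg
  set φ : ℝ → ℝ := fun t => u (x₀ + t • Pi.single i 1) with hφ
  have e1 : deriv φ = fun t => pd d i u (x₀ + t • Pi.single i 1) :=
    funext fun t => (hasDerivAt_shift hu1 i x₀ t).deriv
  have e2 : deriv (deriv φ) = fun t => pd d i (pd d i u) (x₀ + t • Pi.single i 1) := by
    rw [e1]
    exact funext fun t => (hasDerivAt_shift (pd_contDiff hu i) i x₀ t).deriv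
  have hmax : IsLocalMax φ 0 := isLocalMax_of_deriv_deriv_neg (by rw [e2]; simpa using hneg)
    (by rw [e1]; simpa using h1) (hasDerivAt_shift hu1 i x₀ 0).continuousAt
  have hconst : φ =ᶠ[nhds 0] fun _ => u x₀ := by
    filter_upwards [hmax] with t ht
    refine le_antisymm ?_ (hm _)
    simpa [hφ] using ht
  have : deriv (deriv φ) 0 = 0 := by
    rw [(hconst.deriv).deriv_eq]
    simp
  rw [e2] at this
  simp at this
  linarith

lemma lint_cover {d : ℕ} (θ : (Fin d → ℝ) → ℝ) (hp : ZPer d θ) (hc : Continuous θ) :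
    ∫⁻ x in Metric.closedBall (0 : Fin d → ℝ) 2, ENNReal.ofReal (θ x) ≤
      (7 ^ d : ℕ) * ∫⁻ x in Icc (0 : Fin d → ℝ) 1, ENNReal.ofReal (θ x) := by
  classical
  let S : Finset (Fin d → ℤ) := Fintype.piFinset fun _ => Finset.Icc (-3 : ℤ) 3
  have hS : S.card = 7 ^ d := by simp [S]
  let A : (Fin d → ℤ) → Set (Fin d → ℝ) :=
    fun k => (fun x => x + fun i => ((-k i : ℤ) : ℝ)) ⁻¹' Icc (0 : Fin d → ℝ) 1
  have hsub : Metric.closedBall (0 : Fin d → ℝ) 2 ⊆ ⋃ k ∈ S, A k := by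
    intro x hx
    rw [mem_closedBall_zero_iff, pi_norm_le_iff_of_nonneg (by norm_num)] at hx
    obtain ⟨y, hy, k, rfl⟩ := ZPer.exists_mem x
    simp only [mem_iUnion]
    refine ⟨k, ?_, ?_⟩
    · rw [Fintype.mem_piFinset]
      intro i
      have h1 := abs_le.mp (hx i)
      have h2 := hy.1 i
      have h3 := hy.2 i
      simp only [Pi.add_apply, Pi.zero_apply, Pi.one_apply] at h1 h2 h3
      rw [Finset.mem_Icc]
      constructor
      · have : ((-3 : ℤ) : ℝ) ≤ k i := by push_cast; linarith
        exact_mod_cast this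
      · have : (k i : ℝ) ≤ ((3 : ℤ) : ℝ) := by push_cast; linarith
        exact_mod_cast this
    · have : (y + (fun i => (k i : ℝ)) + fun i => ((-k i : ℤ) : ℝ)) = y := by
        funext i; simp
      simp only [A, mem_preimage, this]
      exact hy
  have hA : ∀ k, ∫⁻ x in A k, ENNReal.ofReal (θ x) =
      ∫⁻ x in Icc (0 : Fin d → ℝ) 1, ENNReal.ofReal (θ x) := by
    intro k
    rw [← (measurePreserving_add_right volume
      (fun i => ((-k i : ℤ) : ℝ) : Fin d → ℝ)).setLIntegral_comp_preimage measurableSet_Icc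
      (by fun_prop)]
    refine lintegral_congr fun x => ?_
    have := hp x (-k)
    simp only [Pi.neg_apply] at this
    rw [this]
  calc _ ≤ ∫⁻ x in ⋃ k ∈ S, A k, ENNReal.ofReal (θ x) := lintegral_mono_set hsub
    _ ≤ ∑ k ∈ S, ∫⁻ x in A k, ENNReal.ofReal (θ x) := by
      have : (⋃ k ∈ S, A k) = ⋃ k : S, A k := by
        ext x; simp
      rw [this]
      refine (lintegral_iUnion_le _ _).trans ?_
      rw [tsum_fintype, Finset.sum_coe_sort S (fun k => ∫⁻ x in A k, ENNReal.ofReal (θ x))]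
    _ = _ := by
      simp only [hA, Finset.sum_const, hS, nsmul_eq_mul]

lemma norm_fderiv_le {d : ℕ} (f : (Fin d → ℝ) → ℝ) (x : Fin d → ℝ) :
    ‖fderiv ℝ f x‖ ≤ ∑ i, |pd d i f x| := by
  refine ContinuousLinearMap.opNorm_le_bound _ (Finset.sum_nonneg fun i _ => abs_nonneg _) fun v => ?_
  have hv : fderiv ℝ f x v = ∑ i, v i * pd d i f x := by
    conv_lhs => rw [pi_eq_sum_univ' v]
    simp [pd]
  rw [hv, Finset.sum_mul]
  refine (norm_sum_le _ _).trans (Finset.sum_le_sum fun i _ => ?_)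
  rw [norm_mul, mul_comm]
  exact mul_le_mul_of_nonneg_left (norm_le_pi_norm v i) (abs_nonneg _)

/-- `W^{1,1}` Sobolev inequality on the torus. -/
lemma sobolev {d : ℕ} (hd : 2 ≤ d) : ∃ C : ℝ, 0 < C ∧ ∀ f : (Fin d → ℝ) → ℝ, ContDiff ℝ 1 f →
    ZPer d f → (∀ x, 0 ≤ f x) →
    ∫ x in Icc (0 : Fin d → ℝ) 1, f x ^ ((d : ℝ) / (d - 1)) ≤
      (C * ∫ x in Icc (0 : Fin d → ℝ) 1, (f x + ∑ i, |pd d i f x|)) ^ ((d : ℝ) / (d - 1)) := by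
  have hd' : (2 : ℝ) ≤ d := by exact_mod_cast hd
  have hκ0 : 0 ≤ (d : ℝ) / (d - 1) := div_nonneg (by linarith) (by linarith)
  have hconj : Real.HolderConjugate (Fintype.card (Fin d) : ℝ) ((d : ℝ) / (d - 1)) := by
    rw [Fintype.card_fin]
    exact Real.HolderConjugate.conjExponent (by linarith)
  let χ : ContDiffBump (0 : Fin d → ℝ) := ⟨1, 2, by norm_num, by norm_num⟩
  have hχ : ContDiff ℝ 1 χ := χ.contDiff
  obtain ⟨B, hB⟩ := (hχ.continuous_fderiv (by norm_num)).bounded_above_of_compact_support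
    (χ.hasCompactSupport.fderiv ℝ)
  refine ⟨(7 ^ d : ℕ) * (|B| + 1), by positivity, fun f hf hp h0 => ?_⟩
  set θ : (Fin d → ℝ) → ℝ := fun x => f x + ∑ i, |pd d i f x| with hθ
  have hθc : Continuous θ := by
    have := fun i => pd_cont hf i
    have := hf.continuous
    fun_prop
  have hθ0 : ∀ x, 0 ≤ θ x := fun x => add_nonneg (h0 x) (Finset.sum_nonneg fun i _ => abs_nonneg _)
  have hθp : ZPer d θ := by
    intro x k
    simp only [hθ, hp x k, (hp.pd _) x k]
  set h : (Fin d → ℝ) → ℝ := fun x => χ x * f x with hh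
  have hhc : ContDiff ℝ 1 h := hχ.mul hf
  have hsupp : HasCompactSupport h := χ.hasCompactSupport.mul_right
  have gns := lintegral_pow_le_pow_lintegral_fderiv_aux hconj hhc hsupp
  have lhs : ∫⁻ x in Icc (0 : Fin d → ℝ) 1, ENNReal.ofReal (f x ^ ((d : ℝ) / (d - 1))) ≤
      ∫⁻ x, ‖h x‖ₑ ^ ((d : ℝ) / (d - 1)) := by
    refine le_trans (le_of_eq ?_) (setLIntegral_le_lintegral (Icc (0 : Fin d → ℝ) 1) _)
    refine setLIntegral_congr_fun measurableSet_Icc fun x hx => ?_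
    have hx1 : χ x = 1 := by
      apply χ.one_of_mem_closedBall
      rw [mem_closedBall_zero_iff, pi_norm_le_iff_of_nonneg (by norm_num)]
      intro i
      rw [Real.norm_eq_abs, abs_le]
      have h2 := hx.1 i
      have h3 := hx.2 i
      simp only [Pi.zero_apply, Pi.one_apply] at h2 h3
      exact ⟨by linarith, h3⟩
    simp only [hh, hx1, one_mul]
    rw [Real.enorm_eq_ofReal (h0 x), ENNReal.ofReal_rpow_of_nonneg (h0 x) hκ0]
  have rhs : ∫⁻ x, ‖fderiv ℝ h x‖ₑ ≤ ENNReal.ofReal ((7 ^ d : ℕ) * (|B| + 1) *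
      ∫ x in Icc (0 : Fin d → ℝ) 1, θ x) := by
    have hpt : ∀ x, ‖fderiv ℝ h x‖ₑ ≤ (Metric.closedBall (0 : Fin d → ℝ) 2).indicator
        (fun x => ENNReal.ofReal ((|B| + 1) * θ x)) x := by
      intro x
      by_cases hx : x ∈ Metric.closedBall (0 : Fin d → ℝ) 2
      · rw [indicator_of_mem hx, ← ofReal_norm]
        apply ENNReal.ofReal_le_ofReal
        have e : fderiv ℝ h x = χ x • fderiv ℝ f x + f x • fderiv ℝ χ x :=
          fderiv_fun_mul (hχ.differentiable (by norm_num) x) (hf.differentiable (by norm_num) x)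
        rw [e]
        refine (norm_add_le _ _).trans ?_
        rw [norm_smul, norm_smul, Real.norm_eq_abs, Real.norm_eq_abs, abs_of_nonneg (h0 x),
          abs_of_nonneg χ.nonneg]
        have a1 := norm_fderiv_le f x
        have a2 : ‖fderiv ℝ χ x‖ ≤ |B| := (hB x).trans (le_abs_self _)
        have a3 : χ x ≤ 1 := χ.le_one
        have a4 := χ.nonneg (x := x)
        have a5 := norm_nonneg (fderiv ℝ f x)
        have a6 := h0 x
        have a7 := abs_nonneg B
        simp only [hθ]
        nlinarith [mul_le_mul_of_nonneg_left a2 a6, mul_le_mul_of_nonneg_right a3 a5,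
          mul_nonneg a7 (a5.trans a1)]
      · have hx' : fderiv ℝ h x = 0 := by
          have : x ∉ tsupport h := by
            intro hx'
            apply hx
            have h2 := (tsupport_mul_subset_left (f := χ) (g := f)) hx'
            rw [χ.tsupport_eq] at h2
            exact h2
          exact Function.notMem_support.mp fun h3 => this (support_fderiv_subset ℝ h3)
        rw [← ofReal_norm, hx', norm_zero, ENNReal.ofReal_zero]
        exact zero_le
    calc ∫⁻ x, ‖fderiv ℝ h x‖ₑ ≤ _ := lintegral_mono hpt
      _ = ∫⁻ x in Metric.closedBall (0 : Fin d → ℝ) 2, ENNReal.ofReal ((|B| + 1) * θ x) :=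
        lintegral_indicator Metric.isClosed_closedBall.measurableSet _
      _ ≤ _ := lint_cover (fun x => (|B| + 1) * θ x) (hθp.comp fun z => (|B| + 1) * z)
        (by fun_prop)
      _ = _ := by
        rw [← ofReal_integral_eq_lintegral_ofReal (int_cont (by fun_prop))
          (Filter.Eventually.of_forall fun x => mul_nonneg (by positivity) (hθ0 x)),
          ← ENNReal.ofReal_natCast, ← ENNReal.ofReal_mul (by positivity), integral_const_mul,
          mul_assoc]
  have hI : 0 ≤ (7 ^ d : ℕ) * (|B| + 1) * ∫ x in Icc (0 : Fin d → ℝ) 1, θ x :=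
    mul_nonneg (by positivity) (integral_nonneg hθ0)
  have fin := lhs.trans (gns.trans (ENNReal.rpow_le_rpow rhs hκ0))
  rw [ENNReal.ofReal_rpow_of_nonneg hI hκ0, ← ofReal_integral_eq_lintegral_ofReal
    (int_cont (hf.continuous.rpow_const fun _ => Or.inr hκ0))
    (Filter.Eventually.of_forall fun x => Real.rpow_nonneg (h0 x) _)] at fin
  exact (ENNReal.ofReal_le_ofReal_iff (Real.rpow_nonneg hI _)).mp fin

lemma alg_id {d : ℕ} (a b v : Fin d → ℝ) (H : Fin d → Fin d → ℝ) (hH : ∀ i k, H i k = H k i)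
    (ε γ M η η' : ℝ) (hj : ∀ i, ε * a i + ∑ k, a k * H i k + v i = γ * b i) :
    ∑ i, ((∑ k, (b i * a k + M * H i k) * (H k i * η + a i * (η' * b k))) + ε * b i * (a i * η)) =
      (η + M * η') * (∑ i, (γ * b i ^ 2 - v i * b i)) - ε * (M * η') * (∑ i, a i * b i)
      + η' * (∑ i, a i * b i) ^ 2 + M * η * ∑ i, ∑ k, H i k ^ 2 := by
  have h1 : ∀ i k, (b i * a k + M * H i k) * (H k i * η + a i * (η' * b k)) =
      η * (b i * (a k * H i k)) + η' * ((a i * b i) * (a k * b k)) + M * η * H i k ^ 2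
        + M * η' * (b k * (a i * H k i)) := by
    intro i k
    rw [hH k i]
    ring
  have h2 : ∀ i, ∑ k, a k * H i k = γ * b i - v i - ε * a i := fun i => by linarith [hj i]
  simp only [h1, Finset.sum_add_distrib]
  have e1 : ∑ i, ∑ k, η * (b i * (a k * H i k)) =
      η * (∑ i, (γ * b i ^ 2 - v i * b i)) - ε * η * ∑ i, a i * b i := by
    simp only [← Finset.mul_sum, h2]
    rw [mul_assoc ε, mul_left_comm ε, ← mul_sub]
    congr 1
    rw [Finset.mul_sum, ← Finset.sum_sub_distrib]
    exact Finset.sum_congr rfl fun i _ => by ring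
  have e4 : ∑ i, ∑ k, M * η' * (b k * (a i * H k i)) =
      M * η' * (∑ i, (γ * b i ^ 2 - v i * b i)) - ε * (M * η') * ∑ i, a i * b i := by
    rw [Finset.sum_comm]
    simp only [← Finset.mul_sum, h2]
    rw [mul_assoc ε, mul_left_comm ε, ← mul_sub]
    congr 1
    rw [Finset.mul_sum, ← Finset.sum_sub_distrib]
    exact Finset.sum_congr rfl fun i _ => by ring
  have e2 : ∑ i, ∑ k, η' * ((a i * b i) * (a k * b k)) = η' * (∑ i, a i * b i) ^ 2 := by
    simp only [← Finset.mul_sum]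
    rw [← Finset.sum_mul]
    ring
  have e3 : ∑ i, ∑ k, M * η * H i k ^ 2 = M * η * ∑ i, ∑ k, H i k ^ 2 := by
    simp only [← Finset.mul_sum]
  have e5 : ∑ i, ε * b i * (a i * η) = ε * η * ∑ i, a i * b i := by
    rw [Finset.mul_sum]
    exact Finset.sum_congr rfl fun i _ => by ring
  rw [e1, e2, e3, e4, e5]
  ring

lemma sub_one_mul_nonneg {z p : ℝ} (hz : 0 < z) (hp : 0 ≤ p) : 0 ≤ (z - 1) * (z ^ p - 1) := by
  rcases le_total 1 z with h | h
  · exact mul_nonneg (by linarith) (by linarith [Real.one_le_rpow h hp])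
  · exact mul_nonneg_of_nonpos_of_nonpos (by linarith) (by linarith [Real.rpow_le_one hz.le h hp])

lemma contDiff_rpow' {d : ℕ} {m : (Fin d → ℝ) → ℝ} (hm : ContDiff ℝ 1 m) (h0 : ∀ x, 0 < m x)
    (p : ℝ) : ContDiff ℝ 1 (fun x => m x ^ p) :=
  hm.rpow_const_of_ne fun x => (h0 x).ne'

lemma pd_rpow {d : ℕ} {m : (Fin d → ℝ) → ℝ} (hm : ContDiff ℝ 1 m) (h0 : ∀ x, 0 < m x)
    (p : ℝ) (i : Fin d) (x : Fin d → ℝ) :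
    pd d i (fun x => m x ^ p) x = p * m x ^ (p - 1) * pd d i m x :=
  pd_comp (φ := fun z => z ^ p) hm (Real.hasDerivAt_rpow_const (Or.inl (h0 x).ne')) i

lemma energy {d : ℕ} {α : ℝ} (hd : 2 ≤ d) {g : ℝ → ℝ} {V : (Fin d → ℝ) → ℝ}
    (hg : DifferentiableOn ℝ g (Ioi 0)) (hV : ContDiff ℝ 1 V) {ε : ℝ} (hε : 0 < ε)
    {u m : (Fin d → ℝ) → ℝ} (hs : DiscSol d α g V ε u m) (h0 : ∀ x, 0 < m x)
    {c L : ℝ} (hc : 0 < c) (hgc : ∀ x, c / m x ≤ deriv g (m x)) (hL : ∀ x, gradSq d V x ≤ L)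
    {p : ℝ} (hp : 0 ≤ p) :
    ∫ x in Icc (0 : Fin d → ℝ) 1, m x ^ (p - 1) * gradSq d m x ≤
      L / c ^ 2 * ∫ x in Icc (0 : Fin d → ℝ) 1, m x ^ (p + 1) := by
  have hu2 : ContDiff ℝ 2 u := hs.reg_u.1
  have hu1 : ContDiff ℝ 1 u := hu2.of_le (by norm_num)
  have hm : ContDiff ℝ 1 m := hs.reg_m.1
  have hui : ∀ i, ContDiff ℝ 1 (pd d i u) := fun i => pd_contDiff hu2 i
  have hη : ContDiff ℝ 1 (fun x => m x ^ p) := contDiff_rpow' hm h0 p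
  have hηp : ZPer d (fun x => m x ^ p) := hs.per_m.comp fun z => z ^ p
  set F : Fin d → (Fin d → ℝ) → ℝ := fun k y => m y * pd d k u y with hFdef
  have hF : ∀ k, ContDiff ℝ 1 (F k) := fun k => hm.mul (hui k)
  have hFp : ∀ k, ZPer d (F k) := fun k => hs.per_m.mul (hs.per_u.pd k)
  set G : (Fin d → ℝ) → ℝ := fun x => ε * (m x - 1) with hGdef
  have hG : ContDiff ℝ 1 G := contDiff_const.mul (hm.sub contDiff_const)
  have hGp : ZPer d G := hs.per_m.comp fun z => ε * (z - 1)
  have hFG : ∀ x, ∑ k, pd d k (F k) x = G x := by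
    intro x
    have := hs.fp x
    simp only [divUp] at this
    simp only [hGdef, hFdef]
    linarith
  -- the three integral identities
  have hT : ∀ i, ∫ x in Icc (0 : Fin d → ℝ) 1, ((∑ k, pd d i (F k) x *
      pd d k (fun y => pd d i u y * m y ^ p) x) + pd d i G x * (pd d i u x * m x ^ p)) = 0 :=
    fun i => int_weak_diff hd F hF hFp G hG hGp hFG _ ((hui i).mul hη)
      ((hs.per_u.pd i).mul hηp) i
  have hJ := int_weak hd F hF hFp _ hη hηp
  have hE := int_div hd F hF hFp
  simp only [hFG] at hJ hE
  have cF := fun k => (hF k).continuous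
  have cF' := fun i k => pd_cont (hF k) i
  have cψ := fun i k => pd_cont ((hui i).mul hη) k
  have cG := hG.continuous
  have cG' := fun i => pd_cont hG i
  have cη := hη.continuous
  have cη' := fun i => pd_cont hη i
  have cu' := fun i => (hui i).continuous
  have cm' := fun i => pd_cont hm i
  have cm := hm.continuous
  have c1 : Continuous fun x => m x ^ (p - 1) := (contDiff_rpow' hm h0 _).continuous
  have c2 : Continuous fun x => m x ^ (p + 1) := (contDiff_rpow' hm h0 _).continuous
  set T : Fin d → (Fin d → ℝ) → ℝ := fun i x => (∑ k, pd d i (F k) x *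
      pd d k (fun y => pd d i u y * m y ^ p) x) + pd d i G x * (pd d i u x * m x ^ p) with hTdef
  set J : (Fin d → ℝ) → ℝ := fun x =>
    (∑ k, F k x * pd d k (fun x => m x ^ p) x) + G x * m x ^ p with hJdef
  have cT : ∀ i, Continuous (T i) := fun i => by
    have := cψ i
    have := cF' i
    have := cG' i
    have := cu' i
    refine Continuous.add (continuous_finsetSum _ fun k _ => (cF' i k).mul (cψ i k)) ?_
    exact (cG' i).mul ((cu' i).mul cη)
  have cJ : Continuous J := by
    refine Continuous.add (continuous_finsetSum _ fun k _ => (cF k).mul (cη' k)) ?_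
    exact cG.mul cη
  have hR : ∫ x in Icc (0 : Fin d → ℝ) 1, ((∑ i, T i x) + (ε * J x - ε * G x)) = 0 := by
    rw [integral_add, integral_sub, integral_finsetSum, integral_const_mul, integral_const_mul,
      hE, hJ]
    · rw [Finset.sum_eq_zero fun i _ => hT i]
      simp
    · exact fun i _ => int_cont (cT i)
    · exact int_cont (by fun_prop)
    · exact int_cont (by fun_prop)
    · exact int_cont (by fun_prop)
    · exact int_cont (by fun_prop)
  -- pointwise lower bound
  have hpt : ∀ x, (p + 1) / 2 * (c * (m x ^ (p - 1) * gradSq d m x) - L / c * m x ^ (p + 1)) ≤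
      (∑ i, T i x) + (ε * J x - ε * G x) := by
    intro x
    have hmx := h0 x
    set η := m x ^ p with hηx
    have e1 : m x ^ (p - 1) = η / m x := by rw [Real.rpow_sub_one hmx.ne']
    have e2 : m x ^ (p + 1) = η * m x := by rw [Real.rpow_add_one hmx.ne']
    have hη0 : 0 < η := Real.rpow_pos_of_pos hmx p
    have hj : ∀ i, ε * pd d i u x + ∑ k, pd d k u x * pd d i (pd d k u) x + pd d i V x =
        deriv g (m x) * pd d i m x := by
      intro i
      have hgm : HasDerivAt g (deriv g (m x)) (m x) :=
        ((hg (m x) hmx).differentiableAt (Ioi_mem_nhds hmx)).hasDerivAt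
      rw [← pd_comp hm hgm i]
      have : (fun y => g (m y)) =
          fun y => ε * u y + (1 / 2) * (∑ k, pd d k u y ^ 2) + V y := by
        funext y
        exact (hs.hj y).symm
      rw [this]
      have du := (hu1.differentiable (by norm_num) x).hasFDerivAt
      have dV := (hV.differentiable (by norm_num) x).hasFDerivAt
      have dk := fun k => ((hui k).differentiable (by norm_num) x).hasFDerivAt
      have hh := ((du.const_mul ε).add ((HasFDerivAt.fun_sum (u := Finset.univ)
        fun k _ => (dk k).pow 2).const_mul (1 / 2))).add dV
      have hh' := hh.fderiv
      simp only [pd] at hh' ⊢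
      erw [hh']
      simp [Finset.mul_sum]
      refine Finset.sum_congr rfl fun k _ => ?_
      ring
    have hTx := by
      refine Eq.trans (a := ∑ i, T i x) ?_ (alg_id (fun i => pd d i u x) (fun i => pd d i m x) (fun i => pd d i V x)
        (fun i k => pd d i (pd d k u) x) (fun i k => pd_symm hu2 i k x) ε (deriv g (m x)) (m x) η
        (p * m x ^ (p - 1)) hj)
      refine Finset.sum_congr rfl fun i _ => ?_
      have hGi : pd d i G x = ε * pd d i m x :=
        pd_comp (φ := fun z => ε * (z - 1)) hm
          (by simpa using ((hasDerivAt_id (m x)).sub_const 1).const_mul ε) i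
      simp only [hTdef, hGi]
      congr 1
      refine Finset.sum_congr rfl fun k _ => ?_
      rw [pd_mul (hui i) hη, pd_rpow hm h0, hFdef]
      simp only
      rw [pd_mul hm (hui k)]
    have hJx : J x = m x * (p * m x ^ (p - 1)) * (∑ i, pd d i u x * pd d i m x) + G x * η := by
      simp only [hJdef]
      congr 1
      rw [Finset.mul_sum]
      refine Finset.sum_congr rfl fun k _ => ?_
      rw [pd_rpow hm h0]
      simp only [hFdef]
      ring
    rw [hTx, hJx, e1, e2]
    have hpη : m x * (p * (η / m x)) = p * η := by field_simp
    simp only [hpη]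
    have q1 : 0 ≤ p * (η / m x) * (∑ i, pd d i u x * pd d i m x) ^ 2 := by positivity
    have q2 : 0 ≤ m x * η * ∑ i, ∑ k, pd d i (pd d k u) x ^ 2 :=
      mul_nonneg (by positivity) (Finset.sum_nonneg fun i _ => Finset.sum_nonneg fun k _ => sq_nonneg _)
    have q3 : 0 ≤ ε * (ε * ((m x - 1) * (η - 1))) :=
      mul_nonneg hε.le (mul_nonneg hε.le (sub_one_mul_nonneg hmx hp))
    have q4 : 1 / 2 * (c / m x * gradSq d m x - L * (m x / c)) ≤
        ∑ i, (deriv g (m x) * pd d i m x ^ 2 - pd d i V x * pd d i m x) := by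
      have a1 : ∑ i, (1 / 2 * (c / m x * pd d i m x ^ 2 - pd d i V x ^ 2 * (m x / c))) ≤
          ∑ i, (deriv g (m x) * pd d i m x ^ 2 - pd d i V x * pd d i m x) := by
        refine Finset.sum_le_sum fun i _ => ?_
        have b1 := mul_le_mul_of_nonneg_right (hgc x) (sq_nonneg (pd d i m x))
        have b2 : 0 ≤ (c / m x) * (pd d i m x - pd d i V x * (m x / c)) ^ 2 := by positivity
        have b3 : (c / m x) * (pd d i m x - pd d i V x * (m x / c)) ^ 2 =
            c / m x * pd d i m x ^ 2 - 2 * (pd d i V x * pd d i m x) +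
              pd d i V x ^ 2 * (m x / c) := by
          field_simp
          ring
        linarith
      rw [← Finset.mul_sum, Finset.sum_sub_distrib, ← Finset.mul_sum, ← Finset.sum_mul] at a1
      have a2 := mul_le_mul_of_nonneg_right (hL x) (by positivity : 0 ≤ m x / c)
      refine le_trans ?_ a1
      unfold gradSq at a2 ⊢
      linarith
    have q5 := mul_le_mul_of_nonneg_left q4 (by positivity : 0 ≤ (η + p * η))
    have q6 : (p + 1) / 2 * (c * (η / m x * gradSq d m x) - L / c * (η * m x)) =
        (η + p * η) * (1 / 2 * (c / m x * gradSq d m x - L * (m x / c))) := by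
      field_simp
      ring
    rw [q6]
    simp only [hGdef]
    linarith
  have cgr : Continuous (gradSq d m) := by
    unfold gradSq
    fun_prop
  have hint := integral_mono (μ := volume.restrict (Icc (0 : Fin d → ℝ) 1))
    (int_cont (by fun_prop)) (int_cont (by fun_prop)) hpt
  rw [hR, integral_const_mul, integral_sub (int_cont (by fun_prop)) (int_cont (by fun_prop)),
    integral_const_mul, integral_const_mul] at hint
  have hneg := nonpos_of_mul_nonpos_right hint (by positivity)
  have : L / c ^ 2 * ∫ x in Icc (0 : Fin d → ℝ) 1, m x ^ (p + 1) =
    (L / c * ∫ x in Icc (0 : Fin d → ℝ) 1, m x ^ (p + 1)) / c := by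
    field_simp
  rw [this, le_div_iff₀ hc]
  linarith

lemma grad_pow {d : ℕ} {m : (Fin d → ℝ) → ℝ} (hm : ContDiff ℝ 1 m) (h0 : ∀ x, 0 < m x)
    {K : ℝ} (hK : ∀ p : ℝ, 0 ≤ p → ∫ x in Icc (0 : Fin d → ℝ) 1, m x ^ (p - 1) * gradSq d m x ≤
      K * ∫ x in Icc (0 : Fin d → ℝ) 1, m x ^ (p + 1)) {q : ℝ} (hq : 1 ≤ q) :
    ∫ x in Icc (0 : Fin d → ℝ) 1, ∑ i, |pd d i (fun x => m x ^ q) x| ≤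
      (K + d) * q * ∫ x in Icc (0 : Fin d → ℝ) 1, m x ^ q := by
  have hK' := hK (q - 1) (by linarith)
  rw [sub_add_cancel] at hK'
  have cm' := fun i => pd_cont hm i
  have cq : ∀ q : ℝ, Continuous fun x => m x ^ q := fun q => (contDiff_rpow' hm h0 q).continuous
  have cq1 := cq q
  have cq2 := cq (q - 1 - 1)
  have cq' := fun i => pd_cont (contDiff_rpow' hm h0 q) i
  have cgr : Continuous (gradSq d m) := by
    unfold gradSq
    fun_prop
  have hpt : ∀ x, ∑ i, |pd d i (fun x => m x ^ q) x| ≤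
      q * (m x ^ (q - 1 - 1) * gradSq d m x + d * m x ^ q) := by
    intro x
    have : (d : ℝ) * m x ^ q = ∑ i : Fin d, m x ^ q := by simp
    rw [this, gradSq, Finset.mul_sum, ← Finset.sum_add_distrib, Finset.mul_sum]
    refine Finset.sum_le_sum fun i _ => ?_
    have hmx := h0 x
    rw [pd_rpow hm h0, mul_assoc, abs_mul, abs_of_nonneg (by linarith : 0 ≤ q)]
    refine mul_le_mul_of_nonneg_left ?_ (by linarith)
    have e1 : m x ^ (q - 1) = m x ^ (q - 1 - 1) * m x := by
      rw [← Real.rpow_add_one hmx.ne']; ring_nf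
    have e2 : m x ^ q = m x ^ (q - 1 - 1) * m x ^ 2 := by
      rw [pow_two, ← mul_assoc, ← e1, ← Real.rpow_add_one hmx.ne']; ring_nf
    have e3 : 0 < m x ^ (q - 1 - 1) := Real.rpow_pos_of_pos hmx _
    rw [e1, e2, mul_assoc, abs_mul, abs_of_pos e3, ← mul_add, abs_mul, abs_of_pos hmx]
    refine mul_le_mul_of_nonneg_left ?_ e3.le
    nlinarith [sq_nonneg (|pd d i m x| - m x), sq_abs (pd d i m x), sq_nonneg (pd d i m x),
      sq_nonneg (m x)]
  refine (integral_mono (μ := volume.restrict (Icc (0 : Fin d → ℝ) 1))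
    (int_cont (by fun_prop)) (int_cont (by fun_prop)) hpt).trans ?_
  rw [integral_const_mul, integral_add (int_cont (by fun_prop)) (int_cont (by fun_prop)),
    integral_const_mul]
  have := mul_le_mul_of_nonneg_left hK' (by linarith : 0 ≤ q)
  linarith

lemma sup_bound {d : ℕ} {m : (Fin d → ℝ) → ℝ} (hm : Continuous m) (hp : ZPer d m)
    (h0 : ∀ x, 0 < m x) {b κ : ℝ} (hκ : 1 < κ) (hb : 0 < b)
    (h : ∀ j : ℕ, ∫ x in Icc (0 : Fin d → ℝ) 1, m x ^ (κ ^ j) ≤ b ^ (κ ^ j)) : ∀ x, m x ≤ b := by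
  by_contra hcon
  push Not at hcon
  obtain ⟨x, hx⟩ := hcon
  obtain ⟨y, hy, k, rfl⟩ := ZPer.exists_mem x
  rw [hp y k] at hx
  obtain ⟨b', hb1, hb2⟩ := exists_between hx
  have hb'0 : 0 < b' := hb.trans hb1
  set U := {x | b' < m x} with hU
  have hUo : IsOpen U := isOpen_lt continuous_const hm
  have hint : (interior (Icc (0 : Fin d → ℝ) 1)).Nonempty := by
    rw [← pi_univ_Icc, interior_pi_set finite_univ]
    refine ⟨fun _ => 1 / 2, fun i _ => ?_⟩
    simp only [interior_Icc, Pi.zero_apply, Pi.one_apply]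
    constructor <;> norm_num
  have hycl : y ∈ closure (interior (Icc (0 : Fin d → ℝ) 1)) := by
    rw [(convex_Icc (𝕜 := ℝ) (0 : Fin d → ℝ) 1).closure_interior_eq_closure_of_nonempty_interior hint]
    exact subset_closure hy
  have hne : (U ∩ interior (Icc (0 : Fin d → ℝ) 1)).Nonempty :=
    mem_closure_iff.mp hycl U hUo hb2
  set W := U ∩ interior (Icc (0 : Fin d → ℝ) 1) with hW
  have hWo : IsOpen W := hUo.inter isOpen_interior
  have hWsub : W ⊆ Icc (0 : Fin d → ℝ) 1 := inter_subset_right.trans interior_subset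
  have hWfin : volume W ≠ ⊤ :=
    ((measure_mono hWsub).trans_lt isCompact_Icc.measure_lt_top).ne
  have hWpos : 0 < volume.real W :=
    ENNReal.toReal_pos (hWo.measure_pos volume hne).ne' hWfin
  have hle : ∀ j : ℕ, volume.real W ≤ (b / b') ^ (κ ^ j) := by
    intro j
    have hκj : 0 < κ ^ j := by positivity
    have cq : Continuous fun x => m x ^ (κ ^ j) := hm.rpow_const fun x => Or.inl (h0 x).ne'
    have h1 : b' ^ (κ ^ j) * volume.real W ≤ ∫ x in W, m x ^ (κ ^ j) := by
      have := setIntegral_mono_on (μ := volume) (s := W) (f := fun _ => b' ^ (κ ^ j))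
        (g := fun x => m x ^ (κ ^ j)) (integrableOn_const hWfin)
        ((int_cont cq).mono_set hWsub) hWo.measurableSet
        (fun x hx => Real.rpow_le_rpow hb'0.le (le_of_lt hx.1) hκj.le)
      rw [setIntegral_const, smul_eq_mul] at this
      linarith
    have h2 : ∫ x in W, m x ^ (κ ^ j) ≤ ∫ x in Icc (0 : Fin d → ℝ) 1, m x ^ (κ ^ j) :=
      setIntegral_mono_set (int_cont cq)
        (Filter.Eventually.of_forall fun x => Real.rpow_nonneg (h0 x).le _)
        (Filter.Eventually.of_forall hWsub)
    rw [Real.div_rpow hb.le hb'0.le, le_div_iff₀ (Real.rpow_pos_of_pos hb'0 _), mul_comm]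
    exact h1.trans (h2.trans (h j))
  have hlim : Filter.Tendsto (fun j : ℕ => (b / b') ^ (κ ^ j)) Filter.atTop (nhds 0) :=
    (tendsto_rpow_atTop_of_base_lt_one _ (by have : 0 < b / b' := by positivity
                                             linarith)
      ((div_lt_one hb'0).mpr hb1)).comp (tendsto_pow_atTop_atTop_of_one_lt hκ)
  have := ge_of_tendsto' hlim hle
  linarith

lemma moser {d : ℕ} (hd : 2 ≤ d) (K : ℝ) (hK : 0 ≤ K) : ∃ B : ℝ, 0 < B ∧
    ∀ m : (Fin d → ℝ) → ℝ, ContDiff ℝ 1 m → ZPer d m → (∀ x, 0 < m x) →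
    (∫ x in Icc (0 : Fin d → ℝ) 1, m x = 1) →
    (∀ q : ℝ, 1 ≤ q → ∫ x in Icc (0 : Fin d → ℝ) 1, ∑ i, |pd d i (fun x => m x ^ q) x| ≤
      K * q * ∫ x in Icc (0 : Fin d → ℝ) 1, m x ^ q) → ∀ x, m x ≤ B := by
  obtain ⟨C, hC, hsob⟩ := sobolev hd
  have hd' : (2 : ℝ) ≤ d := by exact_mod_cast hd
  set κ : ℝ := (d : ℝ) / (d - 1) with hκdef
  have hκ : 1 < κ := by
    rw [hκdef, one_lt_div (by linarith)]
    linarith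
  have hκ0 : 0 < κ := by linarith
  set A : ℝ := C * (1 + K) with hA
  have hA0 : 0 < A := by positivity
  set t : ℕ → ℝ := fun n => (|Real.log A| + n * Real.log κ) * (κ⁻¹) ^ n with ht
  have hr : ‖κ⁻¹‖ < 1 := by
    rw [norm_inv, Real.norm_of_nonneg hκ0.le]
    exact inv_lt_one_of_one_lt₀ hκ
  have hlogκ : 0 ≤ Real.log κ := Real.log_nonneg hκ.le
  have ht0 : ∀ n, 0 ≤ t n := fun n => by positivity
  have hts : Summable t := by
    have s1 := (summable_geometric_of_norm_lt_one hr).mul_left |Real.log A|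
    have s2 := (summable_pow_mul_geometric_of_norm_lt_one 1 hr).mul_left (Real.log κ)
    refine (s1.add s2).congr fun n => ?_
    simp only [ht, pow_one]
    ring
  refine ⟨Real.exp (∑' n, t n), Real.exp_pos _, fun m hm hp h0 h1 hgr => ?_⟩
  apply sup_bound hm.continuous hp h0 hκ (Real.exp_pos _)
  have key : ∀ j : ℕ, ∫ x in Icc (0 : Fin d → ℝ) 1, m x ^ (κ ^ j) ≤
      Real.exp (κ ^ j * ∑ n ∈ Finset.range j, t n) := by
    intro j
    induction j with
    | zero => simp [h1]
    | succ j ih =>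
      have hq : 1 ≤ κ ^ j := one_le_pow₀ hκ.le
      have cq := contDiff_rpow' hm h0 (κ ^ j)
      have cq' := fun i => pd_cont cq i
      have cqc := cq.continuous
      have s := hsob _ cq (hp.comp fun z => z ^ (κ ^ j)) fun x => Real.rpow_nonneg (h0 x).le _
      have e : ∀ x, (m x ^ (κ ^ j)) ^ κ = m x ^ (κ ^ (j + 1)) := fun x => by
        rw [← Real.rpow_mul (h0 x).le, pow_succ]
      simp only [e] at s
      refine s.trans ?_
      set I := ∫ x in Icc (0 : Fin d → ℝ) 1, m x ^ (κ ^ j) with hI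
      have hI0 : 0 ≤ I := integral_nonneg fun x => Real.rpow_nonneg (h0 x).le _
      rw [integral_add (int_cont cqc) (int_cont (by fun_prop))]
      have b1 := hgr _ hq
      have b2 : C * (I + ∫ x in Icc (0 : Fin d → ℝ) 1,
          ∑ i, |pd d i (fun x => m x ^ (κ ^ j)) x|) ≤ A * κ ^ j * I := by
        rw [hA, mul_assoc, mul_assoc]
        refine mul_le_mul_of_nonneg_left ?_ hC.le
        nlinarith [mul_nonneg (sub_nonneg.mpr hq) hI0]
      have b0 : 0 ≤ ∫ x in Icc (0 : Fin d → ℝ) 1,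
          ∑ i, |pd d i (fun x => m x ^ (κ ^ j)) x| :=
        integral_nonneg fun x => Finset.sum_nonneg fun i _ => abs_nonneg _
      have b3 : A * κ ^ j * I ≤ Real.exp (|Real.log A| + j * Real.log κ +
          κ ^ j * ∑ n ∈ Finset.range j, t n) := by
        rw [Real.exp_add, Real.exp_add]
        have a1 : A ≤ Real.exp |Real.log A| := by
          calc A = Real.exp (Real.log A) := (Real.exp_log hA0).symm
            _ ≤ _ := Real.exp_le_exp.mpr (le_abs_self _)
        have a2 : Real.exp (j * Real.log κ) = κ ^ j := by
          rw [Real.exp_nat_mul, Real.exp_log hκ0]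
        rw [a2]
        exact mul_le_mul (mul_le_mul_of_nonneg_right a1 (by positivity)) ih hI0 (by positivity)
      refine (Real.rpow_le_rpow (mul_nonneg hC.le (add_nonneg hI0 b0)) (b2.trans b3) hκ0.le).trans ?_
      rw [← Real.exp_mul]
      apply le_of_eq
      congr 1
      rw [Finset.sum_range_succ]
      simp only [ht]
      rw [inv_pow]
      field_simp
      ring
  intro j
  rw [← Real.exp_mul]
  refine (key j).trans (Real.exp_le_exp.mpr ?_)
  rw [mul_comm]
  exact mul_le_mul_of_nonneg_right (hts.sum_le_tsum _ fun n _ => ht0 n) (by positivity)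

lemma beta_gt {g : ℝ → ℝ} (hmono : StrictMonoOn g (Ici 0)) (hdiff : DifferentiableOn ℝ g (Ioi 0))
    {C₁ β : ℝ} (hC : 0 < C₁) (h : ∀ z : ℝ, 0 < z → C₁ * z ^ β ≤ deriv g z) : -1 < β := by
  by_contra hb
  push Not at hb
  have hd : ∀ z : ℝ, 0 < z → HasDerivAt (fun z => g z - C₁ * Real.log z)
      (deriv g z - C₁ * z⁻¹) z := fun z hz =>
    (((hdiff z hz).differentiableAt (Ioi_mem_nhds hz)).hasDerivAt).sub
      ((Real.hasDerivAt_log hz.ne').const_mul C₁)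
  have mono : MonotoneOn (fun z => g z - C₁ * Real.log z) (Ioc 0 1) := by
    apply monotoneOn_of_deriv_nonneg (convex_Ioc 0 1)
    · exact fun z hz => (hd z hz.1).continuousAt.continuousWithinAt
    · intro z hz
      rw [interior_Ioc] at hz
      exact (hd z hz.1).differentiableAt.differentiableWithinAt
    · intro z hz
      rw [interior_Ioc] at hz
      rw [(hd z hz.1).deriv]
      have h1 := h z hz.1
      have h2 : z ^ (-1 : ℝ) ≤ z ^ β := Real.rpow_le_rpow_of_exponent_ge hz.1 hz.2.le hb
      rw [Real.rpow_neg_one] at h2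
      nlinarith [mul_le_mul_of_nonneg_left h2 hC.le]
  set s : ℝ := (g 1 - g 0) / C₁ + 1 with hs
  have hs0 : 0 < s := by
    have : g 0 < g 1 := hmono (by simp) (by simp) one_pos
    have : 0 < (g 1 - g 0) / C₁ := div_pos (by linarith) hC
    linarith
  have hz : Real.exp (-s) ∈ Ioc (0 : ℝ) 1 :=
    ⟨Real.exp_pos _, Real.exp_le_one_iff.mpr (by linarith)⟩
  have h1 := mono hz (by simp) hz.2
  simp only [Real.log_exp, Real.log_one] at h1
  have h2 : g 0 < g (Real.exp (-s)) := hmono (by simp) (Real.exp_pos _).le (Real.exp_pos _)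
  have h3 : C₁ * s = g 1 - g 0 + C₁ := by
    rw [hs]; field_simp
  linarith

lemma V_bounds {d : ℕ} {V : (Fin d → ℝ) → ℝ} (hp : ZPer d V) (hc : Continuous V) (x : Fin d → ℝ) :
    V x ≤ sSup (V '' Icc (0 : Fin d → ℝ) 1) ∧ sInf (V '' Icc (0 : Fin d → ℝ) 1) ≤ V x := by
  obtain ⟨y, hy, k, rfl⟩ := ZPer.exists_mem x
  rw [hp y k]
  have hK := (isCompact_Icc (a := (0 : Fin d → ℝ)) (b := 1)).image hc
  exact ⟨le_csSup hK.bddAbove ⟨y, hy, rfl⟩, csInf_le hK.bddBelow ⟨y, hy, rfl⟩⟩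

lemma lower {d : ℕ} {α : ℝ} {g : ℝ → ℝ} {V : (Fin d → ℝ) → ℝ} (hmono : StrictMonoOn g (Ici 0))
    {ε : ℝ} (hε : 0 < ε) {u m : (Fin d → ℝ) → ℝ} (hs : DiscSol d α g V ε u m) {S : ℝ}
    (hS : ∀ x, V x ≤ S) (x : Fin d → ℝ) : g 1 - S ≤ ε * u x := by
  have hu2 : ContDiff ℝ 2 u := hs.reg_u.1
  obtain ⟨x₀, hx₀⟩ := hs.per_u.exists_min hu2.continuous
  have hmin := min_pd hu2 hx₀
  have hdiv : divUp d m u x₀ = m x₀ * ∑ i, pd d i (pd d i u) x₀ := by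
    unfold divUp
    rw [Finset.mul_sum]
    refine Finset.sum_congr rfl fun i _ => ?_
    rw [pd_mul hs.reg_m.1 (pd_contDiff hu2 i), (hmin i).1]
    ring
  have h1 : 0 ≤ divUp d m u x₀ := by
    rw [hdiv]
    exact mul_nonneg (hs.m_nonneg _) (Finset.sum_nonneg fun i _ => (hmin i).2)
  have h2 := hs.fp x₀
  have h3 : 1 ≤ m x₀ := by
    by_contra hlt
    push Not at hlt
    nlinarith
  have h4 : g 1 ≤ g (m x₀) := hmono.monotoneOn (by simp) (hs.m_nonneg _) h3
  have h5 := hs.hj x₀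
  have h6 : gradSq d u x₀ = 0 := by
    unfold gradSq
    exact Finset.sum_eq_zero fun i _ => by rw [(hmin i).1]; simp
  have h7 := mul_le_mul_of_nonneg_left (hx₀ x) hε.le
  have h8 := hS x₀
  rw [h6] at h5
  linarith

theorem stmt3 (d : ℕ) (α : ℝ) (hα0 : 0 < α) (hα1 : α < 1)
    (g : ℝ → ℝ) (V : (Fin d → ℝ) → ℝ) (hg : Ghyp α g) (hV : Vhyp d α V)
    (hd : 2 ≤ d) (hA1 : A1 d g V) (hA2 : A2 g) :
    ∃ C : ℝ, 0 < C ∧ ∀ ε : ℝ, 0 < ε → ∀ u m : (Fin d → ℝ) → ℝ,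
      DiscSol d α g V ε u m →
        (∀ x, Real.sqrt (gradSq d u x) ≤ C) ∧ (∀ x, m x ≤ C) := by
  obtain ⟨hmono, _, hdiff, _⟩ := hg
  obtain ⟨hVp, hV1, _⟩ := hV
  obtain ⟨m₀, hm₀, hgm₀⟩ := hA1
  obtain ⟨C₁, C₂, β, hC₁, _, hgβ, _⟩ := hA2
  have hm₀ : 0 < m₀ := hm₀
  have hβ := beta_gt hmono hdiff hC₁ hgβ
  have hVb := V_bounds hVp hV1.continuous
  set S := sSup (V '' Icc (0 : Fin d → ℝ) 1) with hS
  set s := sInf (V '' Icc (0 : Fin d → ℝ) 1) with hs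
  have hosc : oscV d V = S - s := rfl
  set c : ℝ := C₁ * m₀ ^ (β + 1) with hc
  have hc0 : 0 < c := by positivity
  have hgc : ∀ z, m₀ ≤ z → c / z ≤ deriv g z := by
    intro z hz
    have hz0 : 0 < z := hm₀.trans_le hz
    refine le_trans ?_ (hgβ z hz0)
    rw [div_le_iff₀ hz0, hc, mul_assoc, ← Real.rpow_add_one hz0.ne']
    exact mul_le_mul_of_nonneg_left (Real.rpow_le_rpow hm₀.le hz (by linarith)) hC₁.le
  have hgrV : ∃ L, 0 ≤ L ∧ ∀ x, gradSq d V x ≤ L := by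
    have cV := fun i => pd_cont hV1 i
    have hp : ZPer d (gradSq d V) := by
      intro x k
      simp only [gradSq, (hVp.pd _) x k]
    obtain ⟨L, hL0, hL⟩ := hp.bdd (by unfold gradSq; fun_prop)
    exact ⟨L, hL0, fun x => (le_abs_self _).trans (hL x)⟩
  obtain ⟨L, hL0, hL⟩ := hgrV
  obtain ⟨B, hB0, hB⟩ := moser hd (L / c ^ 2 + d) (by positivity)
  refine ⟨B + Real.sqrt (2 * (g B - (g 1 - S) - s)), by positivity, fun ε hε u m hsol => ?_⟩
  have hlow := lower hmono hε hsol (fun x => (hVb x).1)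
  have hgr0 : ∀ x, 0 ≤ gradSq d u x := fun x => Finset.sum_nonneg fun i _ => sq_nonneg _
  have hmm : ∀ x, m₀ ≤ m x := by
    intro x
    have h1 := hsol.hj x
    have h2 := hlow x
    have h3 := (hVb x).2
    have h4 := hgr0 x
    refine (hmono.le_iff_le (mem_Ici.mpr hm₀.le) (hsol.m_nonneg x)).mp ?_
    rw [hgm₀, hosc]
    linarith
  have h0 : ∀ x, 0 < m x := fun x => hm₀.trans_le (hmm x)
  have hmC : ContDiff ℝ 1 m := hsol.reg_m.1
  have hmass : ∫ x in Icc (0 : Fin d → ℝ) 1, m x = 1 := by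
    have hE := int_div hd (fun k y => m y * pd d k u y)
      (fun k => hmC.mul (pd_contDiff hsol.reg_u.1 k))
      (fun k => hsol.per_m.mul (hsol.per_u.pd k))
    have e : ∀ x, ∑ k, pd d k (fun y => m y * pd d k u y) x = ε * (m x - 1) := by
      intro x
      have := hsol.fp x
      simp only [divUp] at this
      linarith
    simp only [e] at hE
    rw [integral_const_mul, integral_sub (int_cont hmC.continuous) (int_cont continuous_const)] at hE
    have h1 := (mul_eq_zero.mp hE).resolve_left hε.ne'
    have h2 : ∫ x in Icc (0 : Fin d → ℝ) 1, (1 : ℝ) = 1 := by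
      rw [setIntegral_const, measureReal_def, Real.volume_Icc_pi]
      simp
    linarith
  have hbound := hB m hmC hsol.per_m h0 hmass fun q hq =>
    grad_pow hmC h0 (fun p hp => energy hd hdiff hV1 hε hsol h0 hc0
      (fun x => hgc _ (hmm x)) hL hp) hq
  refine ⟨fun x => ?_, fun x => (hbound x).trans (le_add_of_nonneg_right (Real.sqrt_nonneg _))⟩
  refine le_trans (Real.sqrt_le_sqrt ?_) (le_add_of_nonneg_left hB0.le)
  have h1 := hsol.hj x
  have h2 := hlow x
  have h3 := (hVb x).2
  have h4 : g (m x) ≤ g B := hmono.monotoneOn (hsol.m_nonneg x) hB0.le (hbound x)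
  linarith
end

section
/- Let (u, m, H̄) be a C^∞ solution of the ergodic MFG system with m > 0, where g is C^∞ on (0,∞) with g'(m(x)) bounded below by a positive constant on T^d. Then there exists a constant C > 0, depending only on u, m and g but not on ε, A or B, such that for every ε > 0, all A ∈ C^∞(T^d), B ∈ C^∞(T^d; ℝ^d), and every classical solution (v, θ) of the linearized discounted system ε v + u + Du·Dv = g'(m) θ + A and ε θ − div(m Dv) − div(θ Du) = 1 − m + div(B) on T^d, one has ‖ε v‖_{L²(T^d)} + ‖θ‖_{L²(T^d)} + ‖Dv‖_{L²(T^d)} ≤ C( ‖A‖_{L²(T^d)} + ‖B‖_{L²(T^d)} + 1 ). -/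
open MeasureTheory Set

namespace S17

theorem icont {d : ℕ} {f : (Fin d → ℝ) → ℝ} (hf : Continuous f) :
    IntegrableOn f (Icc (0 : Fin d → ℝ) 1) :=
  hf.continuousOn.integrableOn_compact isCompact_Icc

theorem swap {d e : ℕ} {F : (Fin d → ℝ) → (Fin e → ℝ) → ℝ}
    (hF : Continuous (Function.uncurry F)) :
    ∫ x in Icc (0 : Fin d → ℝ) 1, ∫ y in Icc (0 : Fin e → ℝ) 1, F x y
      = ∫ y in Icc (0 : Fin e → ℝ) 1, ∫ x in Icc (0 : Fin d → ℝ) 1, F x y := by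
  apply integral_integral_swap
  rw [Measure.prod_restrict]
  exact hF.continuousOn.integrableOn_compact (isCompact_Icc.prod isCompact_Icc)

theorem swapR {d : ℕ} {F : (Fin d → ℝ) → ℝ → ℝ}
    (hF : Continuous (Function.uncurry F)) :
    ∫ x in Icc (0 : Fin d → ℝ) 1, ∫ y in Icc (0 : ℝ) 1, F x y
      = ∫ y in Icc (0 : ℝ) 1, ∫ x in Icc (0 : Fin d → ℝ) 1, F x y := by
  apply integral_integral_swap
  rw [Measure.prod_restrict]
  exact hF.continuousOn.integrableOn_compact (isCompact_Icc.prod isCompact_Icc)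

theorem volQ (d : ℕ) : (volume (Icc (0 : Fin d → ℝ) 1)) = 1 := by
  simp [Real.volume_Icc_pi]

theorem constQ (d : ℕ) (c : ℝ) : ∫ _x in Icc (0 : Fin d → ℝ) 1, c = c := by
  simp [Measure.real, volQ]

theorem constR (c : ℝ) : ∫ _x in Icc (0 : ℝ) 1, c = c := by
  simp

theorem trans {d : ℕ} {f : (Fin d → ℝ) → ℝ} (hf : ZPer d f) (z : Fin d → ℝ) :
    ∫ x in Icc (0 : Fin d → ℝ) 1, f (x + z) = ∫ x in Icc (0 : Fin d → ℝ) 1, f x := by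
  have hD := ZSpan.isAddFundamentalDomain' (Pi.basisFun ℝ (Fin d)) volume
  have hinv : ∀ (g : (Submodule.span ℤ (Set.range (Pi.basisFun ℝ (Fin d)))).toAddSubgroup) (x : Fin d → ℝ),
      f (g +ᵥ x) = f x := by
    intro g x
    have h := ((Pi.basisFun ℝ (Fin d)).mem_span_iff_repr_mem ℤ _).mp g.2
    choose k hk using h
    have : (g +ᵥ x : Fin d → ℝ) = x + fun i => (k i : ℝ) := by
      ext i
      have := hk i
      simp at this
      rw [AddSubgroup.vadd_def]
      simp [this, add_comm]
    rw [this, hf]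
  have : Countable (Submodule.span ℤ (Set.range (Pi.basisFun ℝ (Fin d)))).toAddSubgroup :=
    inferInstanceAs (Countable (Submodule.span ℤ (Set.range (Pi.basisFun ℝ (Fin d)))))
  have h1 := (hD.vadd_of_comm z).setIntegral_eq hD hinv
  have hae : (ZSpan.fundamentalDomain (Pi.basisFun ℝ (Fin d)) : Set (Fin d → ℝ)) =ᵐ[volume]
      Icc (0 : Fin d → ℝ) 1 := by
    rw [ZSpan.fundamentalDomain_pi_basisFun]
    exact Measure.univ_pi_Ico_ae_eq_Icc
  rw [← setIntegral_congr_set hae, ← setIntegral_congr_set hae, ← h1]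
  have hmp := measurePreserving_add_left (volume : Measure (Fin d → ℝ)) z
  have := hmp.setIntegral_image_emb (measurableEmbedding_addLeft z) f
    (ZSpan.fundamentalDomain (Pi.basisFun ℝ (Fin d)))
  simp only [add_comm _ z]
  exact this.symm

theorem pdper {d : ℕ} {f : (Fin d → ℝ) → ℝ} (hf : ZPer d f) (i : Fin d) : ZPer d (pd d i f) := by
  intro x k
  unfold pd
  rw [← fderiv_comp_add_right]
  congr 2
  ext y
  exact hf y k

theorem pdcont {d : ℕ} {f : (Fin d → ℝ) → ℝ} (hf : ContDiff ℝ 1 f) (i : Fin d) :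
    Continuous (pd d i f) := by
  unfold pd
  exact (hf.continuous_fderiv (by simp)).clm_apply continuous_const

theorem pdC1 {d : ℕ} {f : (Fin d → ℝ) → ℝ} (hf : ContDiff ℝ 2 f) (i : Fin d) :
    ContDiff ℝ 1 (pd d i f) := by
  unfold pd
  exact (hf.fderiv_right (m := 1) (by norm_num)).clm_apply contDiff_const

theorem fderiv_sum {d : ℕ} (f : (Fin d → ℝ) → ℝ) (x z : Fin d → ℝ) :
    fderiv ℝ f x z = ∑ i, z i * pd d i f x := by
  conv_lhs => rw [pi_eq_sum_univ' z]
  simp [pd, map_sum]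

theorem ftc {d : ℕ} {f : (Fin d → ℝ) → ℝ} (hf : ContDiff ℝ 1 f) (x z : Fin d → ℝ) :
    f (x + z) - f x = ∫ t in Icc (0 : ℝ) 1, ∑ i, z i * pd d i f (x + t • z) := by
  have h : ∀ t ∈ uIcc (0 : ℝ) 1, HasDerivAt (fun t : ℝ => f (x + t • z))
      (∑ i, z i * pd d i f (x + t • z)) t := by
    intro t _
    rw [← fderiv_sum]
    have h1 : HasDerivAt (fun t : ℝ => x + t • z) z t := by
      simpa using ((hasDerivAt_id t).smul_const z).const_add x
    exact ((hf.differentiable (by simp)) _).hasFDerivAt.comp_hasDerivAt t h1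
  have hc : Continuous fun t : ℝ => ∑ i, z i * pd d i f (x + t • z) := by
    have := fun i => pdcont hf i
    fun_prop
  have := intervalIntegral.integral_eq_sub_of_hasDerivAt h (hc.intervalIntegrable 0 1)
  rw [intervalIntegral.integral_of_le zero_le_one, ← integral_Icc_eq_integral_Ioc] at this
  rw [this]; simp

theorem mean0 {d : ℕ} {f : (Fin d → ℝ) → ℝ} (hf : ContDiff ℝ 1 f) (hp : ZPer d f) (i : Fin d) :
    ∫ x in Icc (0 : Fin d → ℝ) 1, pd d i f x = 0 := by
  have hc := pdcont hf i
  have h0 : ∀ x, ∫ t in Icc (0 : ℝ) 1, pd d i f (x + t • Pi.single i (1 : ℝ)) = 0 := by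
    intro x
    have h := ftc hf x (Pi.single i (1 : ℝ))
    have h2 : f (x + Pi.single i (1 : ℝ)) = f x := by
      rw [← hp x (Pi.single i 1)]
      congr 2
      ext j
      by_cases hj : j = i
      · subst hj; simp
      · simp [hj]
    rw [h2, sub_self] at h
    refine Eq.trans ?_ h.symm
    congr 1
    ext t
    simp [Pi.single_apply]
  have h1 := swapR (F := fun x t => pd d i f (x + t • Pi.single i (1 : ℝ)))
    (by unfold Function.uncurry; fun_prop)
  simp only [h0, trans (pdper hp i)] at h1
  rw [constR] at h1
  simpa using h1.symm

theorem transl1 {d : ℕ} {f : (Fin d → ℝ) → ℝ} (hf : ContDiff ℝ 1 f) (hp : ZPer d f)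
    (z : Fin d → ℝ) (hz : z ∈ Icc (0 : Fin d → ℝ) 1) :
    ∫ x in Icc (0 : Fin d → ℝ) 1, |f (x + z) - f x|
      ≤ ∫ x in Icc (0 : Fin d → ℝ) 1, ∑ i, |pd d i f x| := by
  have hc := fun i => pdcont hf i
  have hfc := hf.continuous
  have hper : ZPer d (fun x => ∑ i, |pd d i f x|) := by
    intro x k
    simp only [pdper hp _ x k]
  have h1 := swapR (F := fun x (t : ℝ) => ∑ i, |pd d i f (x + t • z)|)
    (by unfold Function.uncurry; fun_prop)
  have h2 : ∀ t : ℝ, ∫ x in Icc (0 : Fin d → ℝ) 1, ∑ i, |pd d i f (x + t • z)|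
      = ∫ x in Icc (0 : Fin d → ℝ) 1, ∑ i, |pd d i f x| := fun t => trans hper (t • z)
  simp only [h2] at h1
  rw [constR] at h1
  rw [← h1]
  apply setIntegral_mono (icont (by fun_prop))
  · have : Continuous fun x => ∫ t in Icc (0 : ℝ) 1, ∑ i, |pd d i f (x + t • z)| := by
      apply continuous_parametric_integral_of_continuous _ isCompact_Icc
      unfold Function.uncurry; fun_prop
    exact icont this
  · intro x
    dsimp only
    rw [ftc hf x z]
    refine (abs_integral_le_integral_abs).trans ?_
    apply setIntegral_mono
    · exact Continuous.integrableOn_Icc (by fun_prop)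
    · exact Continuous.integrableOn_Icc (by fun_prop)
    · intro t
      refine (Finset.abs_sum_le_sum_abs _ _).trans (Finset.sum_le_sum fun i _ => ?_)
      rw [abs_mul, abs_of_nonneg (hz.1 i)]
      exact mul_le_of_le_one_left (abs_nonneg _) (hz.2 i)

theorem poinc {d : ℕ} {f m : (Fin d → ℝ) → ℝ} (hf : ContDiff ℝ 1 f) (hp : ZPer d f)
    (hm : Continuous m) (hm1 : ∫ x in Icc (0 : Fin d → ℝ) 1, m x = 1) (M : ℝ)
    (hM : ∀ x ∈ Icc (0 : Fin d → ℝ) 1, |m x| ≤ M) :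
    ∫ x in Icc (0 : Fin d → ℝ) 1, (1 - m x) * f x
      ≤ M * ∫ x in Icc (0 : Fin d → ℝ) 1, ∑ i, |pd d i f x| := by
  have hfc := hf.continuous
  have hc := fun i => pdcont hf i
  have hM0 : 0 ≤ M := (abs_nonneg _).trans (hM 0 (by simp))
  have e1 : ∫ x in Icc (0 : Fin d → ℝ) 1, (1 - m x) * f x
      = ∫ x in Icc (0 : Fin d → ℝ) 1, ∫ z in Icc (0 : Fin d → ℝ) 1,
          m x * (f (x + z) - f x) := by
    have : ∀ x, ∫ z in Icc (0 : Fin d → ℝ) 1, m x * (f (x + z) - f x)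
        = m x * (∫ z in Icc (0 : Fin d → ℝ) 1, f z) - m x * f x := by
      intro x
      rw [integral_const_mul, integral_sub (icont (by fun_prop)) (icont (by fun_prop)), constQ]
      simp only [add_comm x]
      rw [trans hp x]; ring
    simp only [this]
    rw [integral_sub (icont (by fun_prop)) (icont (by fun_prop)), integral_mul_const, hm1, one_mul,
      ← integral_sub (icont (by fun_prop)) (icont (by fun_prop))]
    congr 1; ext x; ring
  rw [e1, swap (by unfold Function.uncurry; fun_prop),
    ← constQ d (M * ∫ x in Icc (0 : Fin d → ℝ) 1, ∑ i, |pd d i f x|)]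
  apply setIntegral_mono_on
  · apply icont
    apply continuous_parametric_integral_of_continuous _ isCompact_Icc
    unfold Function.uncurry; fun_prop
  · exact icont continuous_const
  · exact measurableSet_Icc
  · intro z hz
    refine le_trans ?_ (mul_le_mul_of_nonneg_left (transl1 hf hp z hz) hM0)
    rw [← integral_const_mul]
    apply setIntegral_mono_on (icont (by fun_prop)) (icont (by fun_prop)) measurableSet_Icc
    intro x hx
    refine (le_abs_self _).trans ?_
    rw [abs_mul]
    exact mul_le_mul_of_nonneg_right (hM x hx) (abs_nonneg _)

theorem pdmul {d : ℕ} {f h : (Fin d → ℝ) → ℝ} (hf : ContDiff ℝ 1 f) (hh : ContDiff ℝ 1 h)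
    (i : Fin d) (x : Fin d → ℝ) :
    pd d i (fun y => f y * h y) x = pd d i f x * h x + f x * pd d i h x := by
  unfold pd
  rw [fderiv_fun_mul (hf.differentiable (by simp) x) (hh.differentiable (by simp) x)]
  simp; ring

theorem pdadd {d : ℕ} {f h : (Fin d → ℝ) → ℝ} (hf : ContDiff ℝ 1 f) (hh : ContDiff ℝ 1 h)
    (i : Fin d) (x : Fin d → ℝ) :
    pd d i (fun y => f y + h y) x = pd d i f x + pd d i h x := by
  unfold pd
  rw [fderiv_fun_add (hf.differentiable (by simp) x) (hh.differentiable (by simp) x)]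
  simp

theorem young (a b c : ℝ) (hc : 0 < c) : a * b ≤ c / 4 * b ^ 2 + a ^ 2 / c := by
  have : c / 4 * b ^ 2 + a ^ 2 / c - a * b = (c / 2 * b - a) ^ 2 / c := by field_simp; ring
  have := div_nonneg (sq_nonneg (c / 2 * b - a)) hc.le
  linarith

theorem energy {d : ℕ} {G u m A v θ : (Fin d → ℝ) → ℝ} {B : (Fin d → ℝ) → Fin d → ℝ}
    {ε γ μ M : ℝ} (hγ : 0 < γ) (hμ : 0 < μ)
    (hu : ContDiff ℝ 2 u) (hm : ContDiff ℝ 1 m) (hA : Continuous A)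
    (hB : ∀ i, ContDiff ℝ 1 (fun x => B x i)) (hv : ContDiff ℝ 2 v) (hθ : ContDiff ℝ 1 θ)
    (pu : ZPer d u) (pm : ZPer d m) (pB : ∀ i, ZPer d (fun x => B x i)) (pv : ZPer d v)
    (pθ : ZPer d θ)
    (hm1 : ∫ x in Icc (0 : Fin d → ℝ) 1, m x = 1)
    (hM : ∀ x ∈ Icc (0 : Fin d → ℝ) 1, |m x| ≤ M)
    (hmμ : ∀ x ∈ Icc (0 : Fin d → ℝ) 1, μ ≤ m x)
    (hG : ∀ x, γ ≤ G x)
    (e1 : ∀ x, ε * v x + u x + ∑ i, pd d i u x * pd d i v x = G x * θ x + A x)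
    (e2 : ∀ x, ε * θ x - divUp d m v x - divUp d θ u x
              = 1 - m x + ∑ i, pd d i (fun y => B y i) x) :
    γ / 2 * (∫ x in Icc (0 : Fin d → ℝ) 1, θ x ^ 2)
      + μ / 2 * (∫ x in Icc (0 : Fin d → ℝ) 1, gradSq d v x)
    ≤ ((∫ x in Icc (0 : Fin d → ℝ) 1, u x ^ 2) + ∫ x in Icc (0 : Fin d → ℝ) 1, A x ^ 2) / γ
      + ((∫ x in Icc (0 : Fin d → ℝ) 1, ∑ i, B x i ^ 2) + d * M ^ 2) / μ := by
  have hv1 : ContDiff ℝ 1 v := hv.of_le (by norm_num)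
  have hu1 : ContDiff ℝ 1 u := hu.of_le (by norm_num)
  have hpv := fun i => pdC1 hv i
  have hpu := fun i => pdC1 hu i
  have cu := hu.continuous
  have cm := hm.continuous
  have cv := hv.continuous
  have cθ := hθ.continuous
  have cB := fun i => (hB i).continuous
  have cpv := fun i => (hpv i).continuous
  have cpu := fun i => (hpu i).continuous
  -- the total divergence
  set W : Fin d → (Fin d → ℝ) → ℝ := fun i y => (m y * pd d i v y + θ y * pd d i u y) + B y i with hW
  have hW1 : ∀ i, ContDiff ℝ 1 (W i) := fun i =>
    ((hm.mul (hpv i)).add (hθ.mul (hpu i))).add (hB i)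
  have hWv : ∀ i, ContDiff ℝ 1 (fun y => W i y * v y) := fun i => (hW1 i).mul hv1
  have pW : ∀ i, ZPer d (fun y => W i y * v y) := by
    intro i x k
    have := pB i x k
    simp only [hW] at this ⊢
    rw [pm, pdper pv, pθ, pdper pu, pv, this]
  have cdW : ∀ i, Continuous (pd d i (fun y => W i y * v y)) := fun i => pdcont (hWv i) i
  have hdivx : ∀ x, ∑ i, pd d i (fun y => W i y * v y) x
      = (divUp d m v x + divUp d θ u x + ∑ i, pd d i (fun y => B y i) x) * v x
        + ∑ i, W i x * pd d i v x := by
    intro x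
    unfold divUp
    rw [← Finset.sum_add_distrib, ← Finset.sum_add_distrib, Finset.sum_mul,
      ← Finset.sum_add_distrib]
    refine Finset.sum_congr rfl fun i _ => ?_
    rw [pdmul (hW1 i) hv1, pdadd ((hm.mul (hpv i)).add (hθ.mul (hpu i))) (hB i),
      pdadd (hm.mul (hpv i)) (hθ.mul (hpu i))]
  have hdiv0 : ∫ x in Icc (0 : Fin d → ℝ) 1, ∑ i, pd d i (fun y => W i y * v y) x = 0 := by
    rw [integral_finset_sum _ (fun i _ => icont (cdW i))]
    exact Finset.sum_eq_zero fun i _ => mean0 (hWv i) (pW i) i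
  have hid : ∀ x, G x * θ x ^ 2 + m x * gradSq d v x = u x * θ x - A x * θ x + (1 - m x) * v x
      - ∑ i, B x i * pd d i v x + ∑ i, pd d i (fun y => W i y * v y) x := by
    intro x
    have hs : ∑ i, W i x * pd d i v x = m x * gradSq d v x
        + θ x * (∑ i, pd d i u x * pd d i v x) + ∑ i, B x i * pd d i v x := by
      unfold gradSq
      rw [Finset.mul_sum, Finset.mul_sum, ← Finset.sum_add_distrib, ← Finset.sum_add_distrib]
      refine Finset.sum_congr rfl fun i _ => ?_
      simp only [hW]; ring
    rw [hdivx, hs]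
    linear_combination (-θ x) * e1 x + v x * e2 x
  have cgr : Continuous (gradSq d v) := by unfold gradSq; fun_prop
  -- pointwise inequality
  have hpt : ∀ x ∈ Icc (0 : Fin d → ℝ) 1, γ / 2 * θ x ^ 2 + μ / 2 * gradSq d v x
      + M * ∑ i, |pd d i v x|
      ≤ ((1 / γ) * u x ^ 2 + (1 / γ) * A x ^ 2 + (1 / μ) * ∑ i, B x i ^ 2 + d * M ^ 2 / μ)
        + (1 - m x) * v x + ∑ i, pd d i (fun y => W i y * v y) x := by
    intro x hx
    have h0 := hid x
    have h1 : γ * θ x ^ 2 ≤ G x * θ x ^ 2 := mul_le_mul_of_nonneg_right (hG x) (sq_nonneg _)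
    have hgn : 0 ≤ gradSq d v x := Finset.sum_nonneg fun i _ => sq_nonneg _
    have h2 : μ * gradSq d v x ≤ m x * gradSq d v x := mul_le_mul_of_nonneg_right (hmμ x hx) hgn
    have h3 := young (u x) (θ x) γ hγ
    have h4 := young (-A x) (θ x) γ hγ
    have h5 : M * ∑ i, |pd d i v x| - ∑ i, B x i * pd d i v x ≤
        μ / 2 * gradSq d v x + (1 / μ) * ∑ i, B x i ^ 2 + d * M ^ 2 / μ := by
      have hd : (d : ℝ) * M ^ 2 / μ = ∑ i : Fin d, M ^ 2 / μ := by
        simp; ring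
      unfold gradSq
      rw [hd, Finset.mul_sum, Finset.mul_sum, Finset.mul_sum, ← Finset.sum_sub_distrib,
        ← Finset.sum_add_distrib, ← Finset.sum_add_distrib]
      refine Finset.sum_le_sum fun i _ => ?_
      have a1 := young M |pd d i v x| μ hμ
      have a2 := young (-B x i) (pd d i v x) μ hμ
      rw [sq_abs] at a1
      rw [neg_sq] at a2
      have : 1 / μ * B x i ^ 2 = B x i ^ 2 / μ := by ring
      linarith
    have r1 : 1 / γ * u x ^ 2 = u x ^ 2 / γ := by ring
    have r2 : 1 / γ * A x ^ 2 = A x ^ 2 / γ := by ring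
    rw [neg_sq] at h4
    linarith
  have cS : Continuous fun x => ∑ i, pd d i (fun y => W i y * v y) x :=
    continuous_finset_sum _ fun i _ => cdW i
  have hint := setIntegral_mono_on (icont (by fun_prop)) (icont (by fun_prop)) measurableSet_Icc hpt
  have hpo := poinc hv1 pv cm hm1 M hM
  rw [integral_add (icont (by fun_prop)) (icont (by fun_prop)),
    integral_add (icont (by fun_prop)) (icont (by fun_prop)),
    integral_add (icont (by fun_prop)) (icont (by fun_prop)),
    integral_add (icont (by fun_prop)) (icont (by fun_prop)),
    integral_add (icont (by fun_prop)) (icont (by fun_prop)),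
    integral_add (icont (by fun_prop)) (icont (by fun_prop)),
    integral_add (icont (by fun_prop)) (icont (by fun_prop)), hdiv0, constQ] at hint
  simp only [integral_const_mul] at hint
  rw [add_div, add_div]
  have q : ∀ a c : ℝ, 1 / c * a = a / c := fun a c => by ring
  simp only [q] at hint
  linarith

theorem epsv {d : ℕ} {G u A v θ : (Fin d → ℝ) → ℝ}
    {ε K L : ℝ}
    (hu : ContDiff ℝ 1 u) (hA : Continuous A)
    (hv : ContDiff ℝ 1 v) (hθ : Continuous θ)
    (hL : ∀ x ∈ Icc (0 : Fin d → ℝ) 1, gradSq d u x ≤ L)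
    (hK : ∀ x ∈ Icc (0 : Fin d → ℝ) 1, G x ^ 2 ≤ K)
    (e1 : ∀ x, ε * v x + u x + ∑ i, pd d i u x * pd d i v x = G x * θ x + A x) :
    ∫ x in Icc (0 : Fin d → ℝ) 1, (ε * v x) ^ 2
    ≤ 4 * (K * (∫ x in Icc (0 : Fin d → ℝ) 1, θ x ^ 2) + (∫ x in Icc (0 : Fin d → ℝ) 1, A x ^ 2)
      + (∫ x in Icc (0 : Fin d → ℝ) 1, u x ^ 2)
      + L * ∫ x in Icc (0 : Fin d → ℝ) 1, gradSq d v x) := by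
  have cu := hu.continuous
  have cv := hv.continuous
  have cpv := fun i => pdcont hv i
  have cgr : Continuous (gradSq d v) := by unfold gradSq; fun_prop
  have hpt : ∀ x ∈ Icc (0 : Fin d → ℝ) 1, (ε * v x) ^ 2 ≤
      4 * (K * θ x ^ 2 + A x ^ 2 + u x ^ 2 + L * gradSq d v x) := by
    intro x hx
    have hgn : 0 ≤ gradSq d v x := Finset.sum_nonneg fun i _ => sq_nonneg _
    have h1 : (G x * θ x) ^ 2 ≤ K * θ x ^ 2 := by
      rw [mul_pow]; exact mul_le_mul_of_nonneg_right (hK x hx) (sq_nonneg _)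
    have h2 : (∑ i, pd d i u x * pd d i v x) ^ 2 ≤ L * gradSq d v x :=
      (Finset.sum_mul_sq_le_sq_mul_sq _ _ _).trans (mul_le_mul_of_nonneg_right (hL x hx) hgn)
    have h3 : ε * v x = G x * θ x + A x - u x - ∑ i, pd d i u x * pd d i v x := by
      linarith [e1 x]
    rw [h3]
    generalize G x * θ x = a at *
    generalize ∑ i, pd d i u x * pd d i v x = b at *
    nlinarith [sq_nonneg (a - A x), sq_nonneg (a + u x), sq_nonneg (a + b), sq_nonneg (A x + u x),
      sq_nonneg (A x + b), sq_nonneg (u x - b)]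
  have hint := setIntegral_mono_on (icont (by fun_prop)) (icont (by fun_prop)) measurableSet_Icc hpt
  rw [integral_const_mul, integral_add (icont (by fun_prop)) (icont (by fun_prop)),
    integral_add (icont (by fun_prop)) (icont (by fun_prop)),
    integral_add (icont (by fun_prop)) (icont (by fun_prop))] at hint
  simpa only [integral_const_mul] using hint

theorem fin_alg {E T D a b U K L γ μ r : ℝ} (hγ : 0 < γ) (hμ : 0 < μ)
    (hT : 0 ≤ T) (hD : 0 ≤ D) (ha : 0 ≤ a) (hb : 0 ≤ b) (hU : 0 ≤ U) (hK : 0 ≤ K) (hL : 0 ≤ L)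
    (hr : 0 ≤ r)
    (h1 : γ / 2 * T + μ / 2 * D ≤ (U + a) / γ + (b + r) / μ)
    (h2 : E ≤ 4 * (K * T + a + U + L * D))
    (R C : ℝ) (hR : R = (U + 1) / γ + (r + 1) / μ)
    (hC : C = 2 * R / γ + 2 * R / μ + 4 * (K * (2 * R / γ) + 1 + U + L * (2 * R / μ))) :
    √E + √T + √D ≤ (3 * √C + 1) * (√a + √b + 1) := by
  have hR0 : 0 ≤ R := by rw [hR]; positivity
  have hN : 1 ≤ a + b + 1 := by linarith
  have h3 : γ / 2 * T + μ / 2 * D ≤ R * (a + b + 1) := by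
    refine h1.trans ?_
    have : R * (a + b + 1) - ((U + a) / γ + (b + r) / μ)
      = (U * (a + b) + b + 1) / γ + (r * (a + b) + a + 1) / μ := by rw [hR]; ring
    have : 0 ≤ (U * (a + b) + b + 1) / γ + (r * (a + b) + a + 1) / μ := by positivity
    linarith
  have hT' : T ≤ 2 * R / γ * (a + b + 1) := by
    rw [div_mul_eq_mul_div, le_div_iff₀ hγ]
    nlinarith [mul_nonneg hμ.le hD]
  have hD' : D ≤ 2 * R / μ * (a + b + 1) := by
    rw [div_mul_eq_mul_div, le_div_iff₀ hμ]
    nlinarith [mul_nonneg hγ.le hT]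
  have p1 : 0 ≤ 2 * R / γ := by positivity
  have p2 : 0 ≤ 2 * R / μ := by positivity
  have p3 : 0 ≤ 4 * (K * (2 * R / γ) + 1 + U + L * (2 * R / μ)) := by positivity
  have hE' : E ≤ 4 * (K * (2 * R / γ) + 1 + U + L * (2 * R / μ)) * (a + b + 1) := by
    refine h2.trans ?_
    have := mul_le_mul_of_nonneg_left hT' hK
    have := mul_le_mul_of_nonneg_left hD' hL
    nlinarith [mul_nonneg hU (add_nonneg ha hb)]
  have hC0 : 0 ≤ C := by rw [hC]; positivity
  have key : ∀ X c : ℝ, c ≤ C → X ≤ c * (a + b + 1) → √X ≤ √C * (√a + √b + 1) := by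
    intro X c hc hX
    apply Real.sqrt_le_iff.mpr
    refine ⟨by positivity, ?_⟩
    have : (√C * (√a + √b + 1)) ^ 2 = C * (√a + √b + 1) ^ 2 := by
      rw [mul_pow, Real.sq_sqrt hC0]
    rw [this]
    refine hX.trans ((mul_le_mul_of_nonneg_right hc (by linarith)).trans
      (mul_le_mul_of_nonneg_left ?_ hC0))
    nlinarith [Real.sq_sqrt ha, Real.sq_sqrt hb, Real.sqrt_nonneg a, Real.sqrt_nonneg b,
      mul_nonneg (Real.sqrt_nonneg a) (Real.sqrt_nonneg b)]
  have k1 := key E _ (by linarith) hE'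
  have k2 := key T _ (by linarith) hT'
  have k3 := key D _ (by linarith) hD'
  have : 0 ≤ √a + √b + 1 := by positivity
  linarith

theorem bdd {d : ℕ} {f : (Fin d → ℝ) → ℝ} (hf : Continuous f) :
    ∃ M, 0 ≤ M ∧ ∀ x ∈ Icc (0 : Fin d → ℝ) 1, |f x| ≤ M := by
  obtain ⟨M, hM⟩ := isCompact_Icc.exists_bound_of_continuousOn
    (s := Icc (0 : Fin d → ℝ) 1) hf.continuousOn
  exact ⟨M, (norm_nonneg _).trans (hM 0 (by simp)), hM⟩

end S17

theorem stmt17 (d : ℕ) (α : ℝ) (hα0 : 0 < α) (hα1 : α < 1)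
    (g : ℝ → ℝ) (V : (Fin d → ℝ) → ℝ) (hg : Ghyp α g) (hV : Vhyp d α V)
    (hgsm : ContDiffOn ℝ (⊤ : ℕ∞) g (Ioi 0))
    (u m : (Fin d → ℝ) → ℝ) (H : ℝ) (herg : ErgSol d α g V u m H)
    (husm : ContDiff ℝ (⊤ : ℕ∞) u) (hmsm : ContDiff ℝ (⊤ : ℕ∞) m)
    (hmpos : ∀ x, 0 < m x)
    (γ : ℝ) (hγ : 0 < γ) (hgm : ∀ x, γ ≤ deriv g (m x)) :
    ∃ C : ℝ, 0 < C ∧ ∀ ε : ℝ, 0 < ε →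
      ∀ A : (Fin d → ℝ) → ℝ, ∀ B : (Fin d → ℝ) → Fin d → ℝ,
        ContDiff ℝ (⊤ : ℕ∞) A → ZPer d A →
        ContDiff ℝ (⊤ : ℕ∞) B → (∀ i, ZPer d (fun x => B x i)) →
        ∀ v θ : (Fin d → ℝ) → ℝ,
          ContDiff ℝ 2 v → ContDiff ℝ 1 θ → ZPer d v → ZPer d θ →
          (∀ x, ε * v x + u x + ∑ i, pd d i u x * pd d i v x
              = deriv g (m x) * θ x + A x) →
          (∀ x, ε * θ x - divUp d m v x - divUp d θ u x
              = 1 - m x + ∑ i, pd d i (fun y => B y i) x) →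
          Real.sqrt (∫ x in Icc (0 : Fin d → ℝ) 1, (ε * v x) ^ 2)
            + Real.sqrt (∫ x in Icc (0 : Fin d → ℝ) 1, θ x ^ 2)
            + Real.sqrt (∫ x in Icc (0 : Fin d → ℝ) 1, gradSq d v x)
          ≤ C * (Real.sqrt (∫ x in Icc (0 : Fin d → ℝ) 1, A x ^ 2)
            + Real.sqrt (∫ x in Icc (0 : Fin d → ℝ) 1, ∑ i, B x i ^ 2) + 1) := by
  have cgm : Continuous fun x => deriv g (m x) := by
    have h := hgsm.continuousOn_deriv_of_isOpen isOpen_Ioi (by simp)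
    exact h.comp_continuous hmsm.continuous hmpos
  have hu2 : ContDiff ℝ 2 u := herg.reg_u.1
  have hu1 : ContDiff ℝ 1 u := hu2.of_le (by norm_num)
  have hm1 : ContDiff ℝ 1 m := herg.reg_m.1
  have cpu := fun i => S17.pdcont hu1 i
  have cgr : Continuous (gradSq d u) := by unfold gradSq; fun_prop
  obtain ⟨M, hM0, hM⟩ := S17.bdd hm1.continuous
  obtain ⟨K, hK0, hK⟩ := S17.bdd (cgm.pow 2)
  obtain ⟨L, hL0, hL⟩ := S17.bdd cgr
  obtain ⟨x0, -, hx0⟩ := isCompact_Icc.exists_isMinOn (s := Icc (0 : Fin d → ℝ) 1)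
    ⟨0, by simp⟩ hm1.continuous.continuousOn
  set U := ∫ x in Icc (0 : Fin d → ℝ) 1, u x ^ 2 with hU
  have hU0 : 0 ≤ U := integral_nonneg fun x => sq_nonneg _
  obtain ⟨R, hR⟩ : ∃ R, R = (U + 1) / γ + (d * M ^ 2 + 1) / m x0 := ⟨_, rfl⟩
  obtain ⟨C, hC⟩ : ∃ C, C = 2 * R / γ + 2 * R / m x0
    + 4 * (K * (2 * R / γ) + 1 + U + L * (2 * R / m x0)) := ⟨_, rfl⟩
  refine ⟨3 * √C + 1, by positivity, fun ε hε A B hA pA hB pB v θ hv hθ pv pθ e1 e2 => ?_⟩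
  · have hB' : ∀ i, ContDiff ℝ 1 (fun x => B x i) := fun i =>
      ((contDiff_pi.mp hB) i).of_le (by exact_mod_cast le_top)
    have h1 := S17.energy hγ (hmpos x0) hu2 hm1 hA.continuous hB' hv hθ herg.per_u herg.per_m pB pv
      pθ herg.m_mass hM (fun x hx => hx0 hx) hgm e1 e2
    have h2 := S17.epsv hu1 hA.continuous (hv.of_le (by norm_num)) hθ.continuous
      (fun x hx => (le_abs_self _).trans (hL x hx)) (fun x hx => (le_abs_self _).trans (hK x hx)) e1
    exact S17.fin_alg hγ (hmpos x0) (integral_nonneg fun x => sq_nonneg _)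
      (integral_nonneg fun x => Finset.sum_nonneg fun i _ => sq_nonneg _)
      (integral_nonneg fun x => sq_nonneg _)
      (integral_nonneg fun x => Finset.sum_nonneg fun i _ => sq_nonneg _) hU0 hK0 hL0
      (by positivity) h1 h2 R C hR hC
end
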